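/- arXiv:2301.09101 — 3 statements merged into one kernel-verified Lean document; each statement's English description precedes it below -/
import Mathlib

section
/- Let p be a prime and G a finite p-group of nilpotency class 2 such that G^p ≤ γ₂(G), with |γ₂(G)| = p^k and d(G) = d. If d ≤ k + 1, then |M(G)| ≤ p^{(d-1)(k+1)}. -/
/-- The Schur multiplier of a group `G`: the second cohomology group `H²(G, ℂˣ)`
of `G` with coefficients in `ℂˣ` (with trivial `G`-action), as in the paper. -/
noncomputable def schurMultiplier (G : Type) [Group G] : Type :=
  groupCohomology (Rep.trivial ℤ G (Additive ℂˣ)) 2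

open Finset in
open scoped FinsetFamily in
theorem up_card {d : ℕ} (A : Finset (Finset (Fin d))) (h2 : (A : Set (Finset (Fin d))).Sized 2)
    (hA : d ≤ A.card + 1) : (d - 1).choose 2 ≤ (∂⁺ A).card := by
  by_cases hd : d < 3
  · rw [Nat.choose_eq_zero_of_lt (by omega)]; exact Nat.zero_le _
  have hs : (Aᶜˢ : Set (Finset (Fin d))).Sized (d - 2) := by simpa using h2.compls
  have h := kruskal_katona_lovasz_form (i := 1) (r := d - 2) (k := d - 1) (n := d)
    (𝒜 := Aᶜˢ) (by omega) (by omega) (by omega) (by simpa using hs) (by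
      rw [card_compls, ← Nat.choose_symm (by omega)]
      have : d - 1 - (d - 2) = 1 := by omega
      rw [this, Nat.choose_one_right]; omega)
  simp only [Function.iterate_one, shadow_compls, card_compls] at h
  rw [← Nat.choose_symm (by omega)] at h
  have e : d - 1 - (d - 2 - 1) = 2 := by omega
  rwa [e] at h

open Finset Module in
open scoped Classical in
theorem greedy_card {K W ι : Type*} [Field K] [AddCommGroup W] [Module K W] [FiniteDimensional K W]
    (P : Finset ι) (wt : ι → ℕ) (hwt : Function.Injective wt) (v : ι → W) :
    (P.filter fun i => v i ∉ Submodule.span K (v '' {j | j ∈ P ∧ wt j < wt i})).card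
      = finrank K (Submodule.span K (v '' (P : Set ι))) := by
  set E := P.filter fun i => v i ∉ Submodule.span K (v '' {j | j ∈ P ∧ wt j < wt i}) with hE
  have key : ∀ N : ℕ, (E.filter fun i => wt i < N).card
      = finrank K (Submodule.span K (v '' {j | j ∈ P ∧ wt j < N})) := by
    intro N
    induction N with
    | zero =>
      have : {j | j ∈ P ∧ wt j < 0} = (∅ : Set ι) := by ext; simp
      rw [this, Set.image_empty, Submodule.span_empty, finrank_bot]; simp
    | succ N ih =>
      by_cases hN : ∃ i ∈ P, wt i = N
      · obtain ⟨i, hi, rfl⟩ := hN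
        have hset : {j | j ∈ P ∧ wt j < wt i + 1} = insert i {j | j ∈ P ∧ wt j < wt i} := by
          ext j
          simp only [Set.mem_ofPred_eq, Set.mem_insert_iff]
          constructor
          · rintro ⟨h1, h2⟩
            rcases Nat.lt_succ_iff_lt_or_eq.1 h2 with h | h
            · exact Or.inr ⟨h1, h⟩
            · exact Or.inl (hwt h)
          · rintro (rfl | ⟨h1, h2⟩)
            · exact ⟨hi, Nat.lt_succ_self _⟩
            · exact ⟨h1, by omega⟩
        rw [hset, Set.image_insert_eq]
        by_cases hv : v i ∈ Submodule.span K (v '' {j | j ∈ P ∧ wt j < wt i})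
        · rw [Submodule.span_insert_eq_span hv, ← ih]
          congr 1
          ext j
          simp only [mem_filter]
          constructor
          · rintro ⟨h1, h2⟩
            refine ⟨h1, ?_⟩
            rcases Nat.lt_succ_iff_lt_or_eq.1 h2 with h | h
            · exact h
            · exfalso
              have := hwt h
              subst this
              rw [hE, mem_filter] at h1
              exact h1.2 hv
          · rintro ⟨h1, h2⟩
            exact ⟨h1, by omega⟩
        · have h0 : v i ≠ 0 := fun h => hv (h ▸ Submodule.zero_mem _)
          have hfr : finrank K (Submodule.span K (insert (v i) (v '' {j | j ∈ P ∧ wt j < wt i})))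
              = finrank K (Submodule.span K (v '' {j | j ∈ P ∧ wt j < wt i})) + 1 := by
            rw [Submodule.span_insert]
            have h := Submodule.finrank_sup_add_finrank_inf_eq (Submodule.span K {v i})
              (Submodule.span K (v '' {j | j ∈ P ∧ wt j < wt i}))
            rw [finrank_span_singleton h0] at h
            have hd : (Submodule.span K {v i}) ⊓
                (Submodule.span K (v '' {j | j ∈ P ∧ wt j < wt i})) = ⊥ :=
              ((Submodule.disjoint_span_singleton' h0).2 hv).symm.eq_bot
            rw [hd, finrank_bot] at h
            omega
          rw [hfr, ← ih]
          have : (E.filter fun j => wt j < wt i + 1) = insert i (E.filter fun j => wt j < wt i) := by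
            ext j
            simp only [mem_filter, mem_insert]
            constructor
            · rintro ⟨h1, h2⟩
              rcases Nat.lt_succ_iff_lt_or_eq.1 h2 with h | h
              · exact Or.inr ⟨h1, h⟩
              · exact Or.inl (hwt h)
            · rintro (rfl | ⟨h1, h2⟩)
              · exact ⟨by rw [hE, mem_filter]; exact ⟨hi, hv⟩, Nat.lt_succ_self _⟩
              · exact ⟨h1, by omega⟩
          rw [this, card_insert_of_notMem (by simp)]
      · push Not at hN
        have h1 : {j | j ∈ P ∧ wt j < N + 1} = {j | j ∈ P ∧ wt j < N} := by
          ext j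
          simp only [Set.mem_ofPred_eq]
          refine and_congr_right fun hj => ?_
          have := hN j hj
          omega
        rw [h1, ← ih]
        congr 1
        ext j
        simp only [mem_filter]
        refine and_congr_right fun hj => ?_
        have := hN j (mem_filter.1 hj).1
        omega
  have hb := key (P.sup wt + 1)
  have h1 : {j | j ∈ P ∧ wt j < P.sup wt + 1} = (P : Set ι) := by
    ext j
    simp only [Set.mem_ofPred_eq, mem_coe, and_iff_left_iff_imp]
    intro hj
    exact Nat.lt_succ_of_le (le_sup (f := wt) hj)
  rw [h1] at hb
  rw [← hb]
  congr 1
  symm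
  rw [filter_eq_self]
  intro j hj
  exact Nat.lt_succ_of_le (le_sup (f := wt) (mem_filter.1 hj).1)

theorem wt_inj {d : ℕ} : Function.Injective (fun s : Finset (Fin d) => ∑ i ∈ s, 2 ^ (i : ℕ)) := by
  intro s t h
  have := Finset.geomSum_injective (n := 2) le_rfl (a₁ := s.map Fin.valEmbedding)
    (a₂ := t.map Fin.valEmbedding) (by simpa using h)
  exact Finset.map_injective _ this

theorem perm_three {α : Type*} [DecidableEq α] (a b m : α) :
    ({m, a, b} : Finset α) = {a, b, m} := by
  ext; simp only [Finset.mem_insert, Finset.mem_singleton]; tauto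

open Finset Module in
open scoped Classical FinsetFamily in
theorem jacobi_bound {K W T : Type*} [Field K] [AddCommGroup W] [Module K W] [FiniteDimensional K W]
    [AddCommGroup T] [Module K T] {d : ℕ} (c : Fin d → Fin d → W) (hc0 : ∀ a, c a a = 0)
    (hca : ∀ a b, c a b = - c b a) (hcs : ∀ S : Submodule K W, (∀ a b, c a b ∈ S) → S = ⊤)
    (t : Fin d → W →ₗ[K] T)
    (hj : ∀ a b e, t a (c b e) + t b (c e a) + t e (c a b) = 0)
    (hts : ∀ S : Submodule K T, (∀ m w, t m w ∈ S) → S = ⊤)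
    (hdk : d ≤ finrank K W + 1) :
    (FiniteDimensional K T ∧
    finrank K T + (d - 1).choose 2 ≤ d * finrank K W) ∧ finrank K W ≤ d.choose 2 := by
  -- commutators attached to unordered pairs
  have hex : ∃ cs : Finset (Fin d) → W, ∀ a b, a ≠ b → cs {a, b} = c a b ∨ cs {a, b} = - c a b := by
    refine ⟨fun s => if h : ∃ q : Fin d × Fin d, q.1 ≠ q.2 ∧ s = {q.1, q.2} then
      c h.choose.1 h.choose.2 else 0, ?_⟩
    intro a b hab
    have h : ∃ q : Fin d × Fin d, q.1 ≠ q.2 ∧ ({a, b} : Finset (Fin d)) = {q.1, q.2} :=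
      ⟨(a, b), hab, rfl⟩
    simp only [dif_pos h]
    obtain ⟨hne, heq⟩ := h.choose_spec
    generalize h.choose = q at hne heq
    have ha : a ∈ ({q.1, q.2} : Finset (Fin d)) := heq ▸ mem_insert_self _ _
    have hb : b ∈ ({q.1, q.2} : Finset (Fin d)) := heq ▸ (by simp)
    simp only [mem_insert, mem_singleton] at ha hb
    rcases ha with ha | ha <;> rcases hb with hb | hb
    · exact absurd (ha.trans hb.symm) hab
    · left; rw [ha, hb]
    · right; rw [ha, hb]; exact hca _ _
    · exact absurd (ha.trans hb.symm) hab
  obtain ⟨cs, hcs'⟩ := hex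
  have hmemW : ∀ (S : Submodule K W) a b, a ≠ b → (c a b ∈ S ↔ cs {a, b} ∈ S) := by
    intro S a b hab
    rcases hcs' a b hab with h | h <;> rw [h]
    rw [neg_mem_iff]
  have hmem : ∀ (f : W →ₗ[K] T) (S : Submodule K T) a b,
      a ≠ b → (f (c a b) ∈ S ↔ f (cs {a, b}) ∈ S) := by
    intro f S a b hab
    rcases hcs' a b hab with h | h <;> rw [h]
    rw [map_neg, neg_mem_iff]
  let wt : Finset (Fin d) → ℕ := fun s => ∑ i ∈ s, 2 ^ (i : ℕ)
  have hwt : Function.Injective wt := wt_inj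
  let P : Finset (Finset (Fin d)) := powersetCard 2 univ
  have hspan : Submodule.span K (cs '' (P : Set (Finset (Fin d)))) = ⊤ := by
    apply hcs
    intro a b
    by_cases hab : a = b
    · subst hab; rw [hc0]; exact Submodule.zero_mem _
    · refine (hmemW _ a b hab).2 ?_
      exact Submodule.subset_span ⟨{a, b}, by simp [P, card_pair hab], rfl⟩
  let E := P.filter fun i => cs i ∉ Submodule.span K (cs '' {j | j ∈ P ∧ wt j < wt i})
  have hEcard : E.card = finrank K W := by
    have := greedy_card (K := K) P wt hwt cs
    rw [hspan, finrank_top] at this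
    exact this
  have hE2 : (E : Set (Finset (Fin d))).Sized 2 := by
    intro s hs
    have := (mem_filter.1 (mem_coe.1 hs)).1
    exact (mem_powersetCard.1 this).2
  have hup := up_card E hE2 (by omega)
  have hsel : ∀ τ : ↥(∂⁺ E), ∃ m, m ∈ τ.1 ∧ τ.1.erase m ∈ E := fun τ =>
    mem_upShadow_iff_erase_mem.1 τ.2
  choose sel hsel1 hsel2 using hsel
  let S : Finset (Fin d × Finset (Fin d)) :=
    univ.image fun τ : ↥(∂⁺ E) => (sel τ, τ.1.erase (sel τ))
  have hScard : S.card = (∂⁺ E).card := by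
    rw [card_image_of_injective, card_univ, Fintype.card_coe]
    intro τ τ' h
    simp only [Prod.mk.injEq] at h
    apply Subtype.ext
    rw [← insert_erase (hsel1 τ), ← insert_erase (hsel1 τ'), h.2, h.1]
  have hSsub : S ⊆ univ ×ˢ E := by
    intro x hx
    obtain ⟨τ, -, rfl⟩ := mem_image.1 hx
    simp [hsel2 τ]
  let Γ := (univ ×ˢ E) \ S
  have hΓ : Γ.card + (∂⁺ E).card = d * finrank K W := by
    have := card_sdiff_add_card_eq_card hSsub
    rw [hScard, card_product, card_univ, Fintype.card_fin, hEcard] at this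
    exact this
  let T' : Submodule K T := Submodule.span K ((Γ.image fun x => t x.1 (cs x.2) : Finset T) : Set T)
  have hT'mem : ∀ m s, s ∈ E → (m, s) ∉ S → t m (cs s) ∈ T' := by
    intro m s hs hS
    apply Submodule.subset_span
    rw [mem_coe, mem_image]
    exact ⟨(m, s), by simp [Γ, hs, hS], rfl⟩
  have key : ∀ N : ℕ, ∀ (m : Fin d) s, s ∈ P → 2 ^ (m : ℕ) + wt s < N → t m (cs s) ∈ T' := by
    intro N
    induction N with
    | zero => intro m s _ h; exact absurd h (Nat.not_lt_zero _)
    | succ N ih =>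
      have hne : ∀ (m : Fin d) s, s ∈ P → s ∉ E → 2 ^ (m : ℕ) + wt s < N + 1 → t m (cs s) ∈ T' := by
        intro m s hs hsE hw
        have h1 : cs s ∈ Submodule.span K (cs '' {j | j ∈ P ∧ wt j < wt s}) := by
          by_contra h
          exact hsE (mem_filter.2 ⟨hs, h⟩)
        have h2 : Submodule.span K (cs '' {j | j ∈ P ∧ wt j < wt s}) ≤ T'.comap (t m) := by
          rw [Submodule.span_le]
          rintro _ ⟨j, ⟨hj1, hj2⟩, rfl⟩
          exact ih m j hj1 (by omega)
        exact h2 h1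
      intro m s hs hw
      by_cases hsE : s ∈ E
      swap
      · exact hne m s hs hsE hw
      by_cases hS : (m, s) ∈ S
      swap
      · exact hT'mem m s hsE hS
      obtain ⟨τ, -, hτ⟩ := mem_image.1 hS
      simp only [Prod.mk.injEq] at hτ
      obtain ⟨rfl, rfl⟩ := hτ
      set m := sel τ with hm
      obtain ⟨a, b, hab, hs'⟩ := card_eq_two.1 (mem_powersetCard.1 hs).2
      have hma : m ≠ a := by
        rintro h
        have : a ∈ τ.1.erase m := by rw [hs']; simp
        rw [h] at this; simp at this
      have hmb : m ≠ b := by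
        rintro h
        have : b ∈ τ.1.erase m := by rw [hs']; simp
        rw [h] at this; simp at this
      have hτ : τ.1 = {m, a, b} := by
        rw [← insert_erase (hsel1 τ), ← hm, hs']
      have other : ∀ u v w : Fin d, u ≠ v → u ≠ w → v ≠ w → u ≠ m → τ.1 = {u, v, w} →
          t u (cs {v, w}) ∈ T' := by
        intro u v w huv huw hvw hum hτ'
        have hP : ({v, w} : Finset (Fin d)) ∈ P := by simp [P, card_pair hvw]
        have hw' : 2 ^ (u : ℕ) + wt {v, w} < N + 1 := by
          have e1 : wt τ.1 = 2 ^ (u : ℕ) + wt {v, w} := by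
            rw [hτ']; simp only [wt]; rw [sum_insert (by simp [huv, huw])]
          have e2 : wt τ.1 = 2 ^ (m : ℕ) + wt (τ.1.erase m) := by
            rw [hs', hτ]; simp only [wt]; rw [sum_insert (by simp [hma, hmb])]
          omega
        by_cases hvE : ({v, w} : Finset (Fin d)) ∈ E
        · apply hT'mem _ _ hvE
          intro hS'
          obtain ⟨τ', -, hτ''⟩ := mem_image.1 hS'
          simp only [Prod.mk.injEq] at hτ''
          have : τ' = τ := by
            apply Subtype.ext
            rw [← insert_erase (hsel1 τ'), hτ''.2, hτ''.1, hτ']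
          rw [this] at hτ''
          exact hum hτ''.1.symm
        · exact hne u _ hP hvE hw'
      have o1 := other a b m hab hma.symm hmb.symm hma.symm (hτ.trans (perm_three _ _ _))
      have o2 := other b m a hmb.symm hab.symm hma hmb.symm (hτ.trans ((perm_three _ _ _).trans (perm_three _ _ _)))
      rw [← hmem (t a) T' b m hmb.symm] at o1
      rw [← hmem (t b) T' m a hma] at o2
      rw [hs', ← hmem (t m) T' a b hab]
      have hJ := hj m a b
      have : t m (c a b) = -(t a (c b m) + t b (c m a)) := by
        rw [eq_neg_iff_add_eq_zero, ← hJ]; abel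
      rw [this]
      exact T'.neg_mem (T'.add_mem o1 o2)
  have hT' : T' = ⊤ := by
    apply hts
    intro m w
    have : Submodule.span K (cs '' (P : Set (Finset (Fin d)))) ≤ T'.comap (t m) := by
      rw [Submodule.span_le]
      rintro _ ⟨j, hj1, rfl⟩
      exact key _ m j hj1 (Nat.lt_succ_self _)
    rw [hspan] at this
    exact this trivial
  have hfd : FiniteDimensional K T := by
    have : T'.FG := ⟨_, rfl⟩
    rw [hT'] at this
    exact ⟨this⟩
  refine ⟨⟨hfd, ?_⟩, ?_⟩
  · have h1 : finrank K T' ≤ (Γ.image fun x => t x.1 (cs x.2)).card := finrank_span_finset_le_card _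
    rw [hT', finrank_top] at h1
    have h2 : (Γ.image fun x => t x.1 (cs x.2)).card ≤ Γ.card := card_image_le
    omega
  · rw [← hEcard]
    refine (card_filter_le _ _).trans ?_
    simp [P]

open scoped commutatorElement

theorem card_map_mul_card_inf_ker {E H : Type*} [Group E] [Group H] (f : E →* H) (S : Subgroup E) :
    Nat.card S = Nat.card (S.map f) * Nat.card (S ⊓ f.ker : Subgroup E) := by
  have h := Subgroup.card_eq_card_quotient_mul_card_subgroup (f.domRestrict S).ker
  rw [h]
  congr 1
  · rw [Nat.card_congr (QuotientGroup.quotientKerEquivRange (f.domRestrict S)).toEquiv,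
      MonoidHom.domRestrict_range]
  · rw [MonoidHom.ker_domRestrict]
    have := Nat.card_congr (Subgroup.equivMapOfInjective (f.ker.subgroupOf S) S.subtype
      S.subtype_injective).toEquiv
    rw [this, Subgroup.subgroupOf_map_subtype, inf_comm]

theorem comm_mul_left_of_central {E : Type*} [Group E] {a b c : E}
    (h : ⁅b, c⁆ ∈ Subgroup.center E) : ⁅a * b, c⁆ = ⁅a, c⁆ * ⁅b, c⁆ := by
  rw [commutatorElement_mul_left_eq_conj_mul, Subgroup.mem_center_iff.1 h a, mul_inv_cancel_right,
    Subgroup.mem_center_iff.1 h]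

theorem comm_mul_right_of_central {E : Type*} [Group E] {a b c : E}
    (h : ⁅a, c⁆ ∈ Subgroup.center E) : ⁅a, b * c⁆ = ⁅a, b⁆ * ⁅a, c⁆ := by
  rw [commutatorElement_mul_right_eq_mul_conj, mul_assoc ⁅a, b⁆ b, Subgroup.mem_center_iff.1 h b,
    ← mul_assoc, mul_inv_cancel_right]

theorem comm_eq_one_left {E : Type*} [Group E] {a b : E}
    (h : a ∈ Subgroup.center E) : ⁅a, b⁆ = 1 :=
  commutatorElement_eq_one_iff_mul_comm.2 (Subgroup.mem_center_iff.1 h b).symm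

theorem comm_eq_one_right {E : Type*} [Group E] {a b : E}
    (h : b ∈ Subgroup.center E) : ⁅a, b⁆ = 1 :=
  commutatorElement_eq_one_iff_mul_comm.2 (Subgroup.mem_center_iff.1 h a)

theorem comm_pow_left {E : Type*} [Group E] {c : E}
    (h : ∀ b : E, ⁅b, c⁆ ∈ Subgroup.center E) (a : E) (n : ℕ) : ⁅a ^ n, c⁆ = ⁅a, c⁆ ^ n := by
  induction n with
  | zero => simp
  | succ n ih => rw [pow_succ, comm_mul_left_of_central (h a), ih, pow_succ]

/-- The elements `y` with `⁅y, c⁆ ∈ S`, when all commutators with `c` are central. -/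
def leftSub {E : Type*} [Group E] (c : E) (h : ∀ b : E, ⁅b, c⁆ ∈ Subgroup.center E)
    (S : Subgroup E) : Subgroup E where
  carrier := {y | ⁅y, c⁆ ∈ S}
  one_mem' := by simp [S.one_mem]
  mul_mem' {a b} ha hb := by
    change ⁅a * b, c⁆ ∈ S
    rw [comm_mul_left_of_central (h b)]
    exact S.mul_mem ha hb
  inv_mem' {a} ha := by
    change ⁅a⁻¹, c⁆ ∈ S
    have : ⁅a⁻¹, c⁆ * ⁅a, c⁆ = 1 := by
      rw [← comm_mul_left_of_central (h a)]; simp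
    rw [eq_inv_of_mul_eq_one_left this]
    exact S.inv_mem ha

theorem leftSub_eq_top {E : Type*} [Group E] {c : E} (h : ∀ b : E, ⁅b, c⁆ ∈ Subgroup.center E)
    {S : Subgroup E} {ι : Type*} {x : ι → E}
    (hx : Subgroup.closure (Set.range x ∪ Subgroup.center E) = ⊤)
    (hS : ∀ i, ⁅x i, c⁆ ∈ S) (y : E) : ⁅y, c⁆ ∈ S := by
  have : (⊤ : Subgroup E) ≤ leftSub c h S := by
    rw [← hx, Subgroup.closure_le]
    rintro z (⟨i, rfl⟩ | hz)
    · exact hS i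
    · change ⁅z, c⁆ ∈ S
      rw [comm_eq_one_left hz]; exact S.one_mem
  exact this (Subgroup.mem_top y)

theorem comm_le_of_gens {E : Type*} [Group E] (hcl : commutator E ≤ Subgroup.center E)
    {S : Subgroup E} {ι : Type*} {x : ι → E}
    (hx : Subgroup.closure (Set.range x ∪ Subgroup.center E) = ⊤)
    (hS : ∀ i j, ⁅x i, x j⁆ ∈ S) : commutator E ≤ S := by
  have hc : ∀ a b : E, ⁅a, b⁆ ∈ Subgroup.center E := fun a b =>
    hcl (Subgroup.commutator_mem_commutator (Subgroup.mem_top a) (Subgroup.mem_top b))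
  rw [commutator_def, Subgroup.commutator_le]
  intro a _ b _
  apply leftSub_eq_top (fun y => hc y b) hx
  intro i
  rw [← commutatorElement_inv]
  apply S.inv_mem
  apply leftSub_eq_top (fun y => hc y _) hx
  intro j
  exact hS j i

theorem comm_pow_eq_one {E : Type*} [Group E] (hcl : commutator E ≤ Subgroup.center E) {p : ℕ}
    (hp : ∀ q : E, q ^ p ∈ Subgroup.center E) {w : E} (hw : w ∈ commutator E) : w ^ p = 1 := by
  have hc : ∀ a b : E, ⁅a, b⁆ ∈ Subgroup.center E := fun a b =>
    hcl (Subgroup.commutator_mem_commutator (Subgroup.mem_top a) (Subgroup.mem_top b))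
  rw [commutator_eq_closure] at hw
  induction hw using Subgroup.closure_induction with
  | mem w hw =>
    obtain ⟨a, b, rfl⟩ := hw
    rw [← comm_pow_left (fun y => hc y b), comm_eq_one_left (hp a)]
  | one => simp
  | mul a b ha hb iha ihb =>
    rw [← commutator_eq_closure] at ha hb
    rw [(show Commute a b from Subgroup.mem_center_iff.1 (hcl hb) a).mul_pow, iha, ihb, one_mul]
  | inv a _ iha => rw [inv_pow, iha, inv_one]

open Module in
theorem card_le_of_gens_add {C : Type*} [AddCommGroup C] {p : ℕ} [Fact p.Prime]
    [Module (ZMod p) C]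
    (F : Finset C) (hF : ∀ S : AddSubgroup C, (∀ c ∈ F, c ∈ S) → S = ⊤) :
    Finite C ∧ Nat.card C ≤ p ^ F.card := by
  have hT : Submodule.span (ZMod p) (F : Set C) = ⊤ := by
    have := hF (Submodule.span (ZMod p) (F : Set C)).toAddSubgroup
      (fun c hc => Submodule.subset_span hc)
    rw [eq_top_iff]
    intro a _
    have h2 : a ∈ (⊤ : AddSubgroup C) := AddSubgroup.mem_top _
    rw [← this] at h2
    exact h2
  have hfd : FiniteDimensional (ZMod p) C := by
    have : (Submodule.span (ZMod p) (F : Set C)).FG := ⟨_, rfl⟩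
    rw [hT] at this
    exact ⟨this⟩
  have hfin : Finite C := Module.finite_of_finite (ZMod p)
  have hfr : finrank (ZMod p) (Submodule.span (ZMod p) (F : Set C)) ≤ F.card :=
    finrank_span_finset_le_card _
  rw [hT, finrank_top] at hfr
  refine ⟨hfin, ?_⟩
  have h := Module.natCard_eq_pow_finrank (K := ZMod p) (V := C)
  rw [Nat.card_zmod] at h
  rw [h]
  exact Nat.pow_le_pow_right (Fact.out : p.Prime).pos hfr

theorem card_le_of_gens {C : Type*} [CommGroup C] {p : ℕ} [Fact p.Prime] (hp : ∀ c : C, c ^ p = 1)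
    (F : Finset C) (hF : ∀ S : Subgroup C, (∀ c ∈ F, c ∈ S) → S = ⊤) :
    Finite C ∧ Nat.card C ≤ p ^ F.card :=
  @card_le_of_gens_add (Additive C) _ p _
    (AddCommGroup.zmodModule (fun a => congrArg Additive.ofMul (hp a.toMul))) F
    (fun S hS => by
      have := hF (AddSubgroup.toSubgroup' S) hS
      rw [eq_top_iff]
      intro a _
      have h2 : a.toMul ∈ (⊤ : Subgroup C) := Subgroup.mem_top _
      rw [← this] at h2
      exact h2)

/-- The commutative group structure on a central subgroup. -/
@[reducible] def centralCommGroup {Q : Type*} [Group Q] (C : Subgroup Q)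
    (h : C ≤ Subgroup.center Q) : CommGroup C :=
  { (inferInstance : Group C) with
    mul_comm := fun a b => Subtype.ext (Subgroup.mem_center_iff.1 (h b.2) a) }

theorem map_subtype_top {Q : Type*} [Group Q] {C : Subgroup Q} {S : Subgroup C}
    (h : C ≤ S.map C.subtype) : S = ⊤ := by
  rw [eq_top_iff]
  intro a _
  obtain ⟨b, hb, hba⟩ := h a.2
  have : b = a := Subtype.ext hba
  rwa [← this]

theorem card_comm_class_two {Q : Type*} [Group Q] {p d : ℕ} [Fact p.Prime]
    (hcl : commutator Q ≤ Subgroup.center Q) (hp : ∀ q : Q, q ^ p ∈ Subgroup.center Q)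
    (x : Fin d → Q) (hx : Subgroup.closure (Set.range x ∪ Subgroup.center Q) = ⊤) :
    Finite (commutator Q) ∧ Nat.card (commutator Q) ≤ p ^ d.choose 2 := by
  classical
  have hc : ∀ a b : Q, ⁅a, b⁆ ∈ commutator Q := fun a b =>
    Subgroup.commutator_mem_commutator (Subgroup.mem_top a) (Subgroup.mem_top b)
  let F : Finset (commutator Q) :=
    ((Finset.univ : Finset (Fin d × Fin d)).filter fun q => q.1 < q.2).image
      fun q => (⟨⁅x q.1, x q.2⁆, hc _ _⟩ : commutator Q)
  have hF : F.card ≤ d.choose 2 := by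
    refine Finset.card_image_le.trans ?_
    have : ((Finset.univ : Finset (Fin d × Fin d)).filter fun q => q.1 < q.2).card ≤
        (Finset.powersetCard 2 (Finset.univ : Finset (Fin d))).card := by
      refine Finset.card_le_card_of_injOn (fun q => {q.1, q.2}) ?_ ?_
      · intro q hq
        have : q.1 < q.2 := by simpa using hq
        simp [Finset.card_pair this.ne]
      · rintro ⟨a, b⟩ hq ⟨a', b'⟩ hq' h
        have h1 : a < b := by simpa using hq
        have h2 : a' < b' := by simpa using hq'
        simp only at h
        have m1 : a ∈ ({a', b'} : Finset (Fin d)) := h ▸ (by simp)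
        have m2 : b ∈ ({a', b'} : Finset (Fin d)) := h ▸ (by simp)
        simp only [Finset.mem_insert, Finset.mem_singleton] at m1 m2
        ext <;> simp only <;> omega
    simpa using this
  have hgen : ∀ S : Subgroup (commutator Q), (∀ c ∈ F, c ∈ S) → S = ⊤ := by
    intro S' hS'
    apply map_subtype_top
    set S : Subgroup Q := S'.map (commutator Q).subtype
    have hlt : ∀ i j, i < j → ⁅x i, x j⁆ ∈ S := by
      intro i j hij
      refine ⟨⟨⁅x i, x j⁆, hc _ _⟩, ?_, rfl⟩
      apply hS'
      rw [Finset.mem_image]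
      exact ⟨(i, j), by simpa using hij, rfl⟩
    apply comm_le_of_gens hcl hx
    intro i j
    rcases lt_trichotomy i j with h | h | h
    · exact hlt i j h
    · rw [h, commutatorElement_self]; exact S.one_mem
    · rw [← commutatorElement_inv]; exact S.inv_mem (hlt j i h)
  have h := @card_le_of_gens (commutator Q) (centralCommGroup _ hcl) p _
    (fun c => Subtype.ext (comm_pow_eq_one hcl hp c.2)) F hgen
  exact ⟨h.1, h.2.trans (Nat.pow_le_pow_right (Fact.out : p.Prime).pos hF)⟩

open Module in
theorem jacobi_bound_add {p : ℕ} [Fact p.Prime] {W T : Type*} [AddCommGroup W] [AddCommGroup T]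
    [Module (ZMod p) W] [Module (ZMod p) T] {d k : ℕ} (hk : Nat.card W = p ^ k)
    (c : Fin d → Fin d → W) (hc0 : ∀ a, c a a = 0)
    (hca : ∀ a b, c a b = -(c b a)) (hcs : ∀ S : AddSubgroup W, (∀ a b, c a b ∈ S) → S = ⊤)
    (t : Fin d → W →+ T)
    (hj : ∀ a b e, t a (c b e) + t b (c e a) + t e (c a b) = 0)
    (hts : ∀ S : AddSubgroup T, (∀ m w, t m w ∈ S) → S = ⊤)
    (hdk : d ≤ k + 1) :
    (∃ r, Nat.card T = p ^ r ∧ r + (d - 1).choose 2 ≤ d * k) ∧ k ≤ d.choose 2 := by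
  have hpp : p.Prime := Fact.out
  have hfinW : Finite W :=
    Nat.finite_of_card_ne_zero (by rw [hk]; exact pow_ne_zero _ hpp.ne_zero)
  have hfr : finrank (ZMod p) W = k := by
    have h := Module.natCard_eq_pow_finrank (K := ZMod p) (V := W)
    rw [Nat.card_zmod, hk] at h
    exact (Nat.pow_right_injective hpp.two_le h).symm
  have main := jacobi_bound (K := ZMod p) c hc0 hca
    (fun S hS => by
      have := hcs S.toAddSubgroup hS
      rw [eq_top_iff]
      intro a _
      have h2 : a ∈ (⊤ : AddSubgroup W) := AddSubgroup.mem_top _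
      rw [← this] at h2
      exact h2)
    (fun m => (t m).toZModLinearMap p) hj
    (fun S hS => by
      have := hts S.toAddSubgroup hS
      rw [eq_top_iff]
      intro a _
      have h2 : a ∈ (⊤ : AddSubgroup T) := AddSubgroup.mem_top _
      rw [← this] at h2
      exact h2)
    (by rw [hfr]; exact hdk)
  rw [hfr] at main
  obtain ⟨⟨hfd, h1⟩, h2⟩ := main
  refine ⟨⟨_, ?_, h1⟩, h2⟩
  have h := Module.natCard_eq_pow_finrank (K := ZMod p) (V := T)
  rw [Nat.card_zmod] at h
  exact h

theorem jacobi_bound_group {p : ℕ} [Fact p.Prime] {W T : Type*} [CommGroup W] [CommGroup T]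
    (hW : ∀ c : W, c ^ p = 1) (hT : ∀ c : T, c ^ p = 1) {d k : ℕ} (hk : Nat.card W = p ^ k)
    (c : Fin d → Fin d → W) (hc0 : ∀ a, c a a = 1)
    (hca : ∀ a b, c a b = (c b a)⁻¹) (hcs : ∀ S : Subgroup W, (∀ a b, c a b ∈ S) → S = ⊤)
    (t : Fin d → W →* T)
    (hj : ∀ a b e, t a (c b e) * t b (c e a) * t e (c a b) = 1)
    (hts : ∀ S : Subgroup T, (∀ m w, t m w ∈ S) → S = ⊤)
    (hdk : d ≤ k + 1) :
    (∃ r, Nat.card T = p ^ r ∧ r + (d - 1).choose 2 ≤ d * k) ∧ k ≤ d.choose 2 :=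
  @jacobi_bound_add p _ (Additive W) (Additive T) _ _
    (AddCommGroup.zmodModule (fun a => congrArg Additive.ofMul (hW a.toMul)))
    (AddCommGroup.zmodModule (fun a => congrArg Additive.ofMul (hT a.toMul))) _ _ hk
    (fun a b => Additive.ofMul (c a b)) (fun a => congrArg Additive.ofMul (hc0 a))
    (fun a b => congrArg Additive.ofMul (hca a b))
    (fun S hS => by
      have := hcs (AddSubgroup.toSubgroup' S) hS
      rw [eq_top_iff]
      intro a _
      have h2 : a.toMul ∈ (⊤ : Subgroup W) := Subgroup.mem_top _
      rw [← this] at h2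
      exact h2)
    (fun m => MonoidHom.toAdditive (t m))
    (fun a b e => congrArg Additive.ofMul (hj a b e))
    (fun S hS => by
      have := hts (AddSubgroup.toSubgroup' S) hS
      rw [eq_top_iff]
      intro a _
      have h2 : a.toMul ∈ (⊤ : Subgroup T) := Subgroup.mem_top _
      rw [← this] at h2
      exact h2) hdk

theorem map_derived {E Q : Type*} [Group E] [Group Q] (f : E →* Q)
    (hf : Function.Surjective f) : commutator Q = (commutator E).map f := by
  rw [commutator_def, commutator_def, Subgroup.map_commutator, Subgroup.map_top_of_surjective f hf]

theorem top_le_map_closure {E Q : Type*} [Group E] [Group Q] (f : E →* Q)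
    (hf : Function.Surjective f) {S : Set E} (hS : Subgroup.closure S = ⊤) :
    ⊤ ≤ Subgroup.closure (Set.image f S) := by
  rw [← MonoidHom.map_closure, hS, Subgroup.map_top_of_surjective f hf]

theorem central_ext_bound {p : ℕ} [Fact p.Prime] {G E : Type*} [Group G] [Group E] (π : E →* G)
    (hπ : Function.Surjective π) (hker : π.ker ≤ Subgroup.center E)
    (hcl : commutator G ≤ Subgroup.center G) (hGp : ∀ g : G, g ^ p ∈ commutator G)
    {d k : ℕ} (hk : Nat.card (commutator G) = p ^ k) (x : Fin d → G)
    (hx : Subgroup.closure (Set.range x) = ⊤) (hdk : d ≤ k + 1) :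
    (Finite (commutator E ⊓ π.ker : Subgroup E) ∧
      Nat.card (commutator E ⊓ π.ker : Subgroup E) ≤ p ^ ((d - 1) * (k + 1))) ∧
      k ≤ d.choose 2 := by
  have hpp : p.Prime := Fact.out
  have hmap : (commutator E).map π = commutator G := by
    rw [commutator_def, commutator_def, Subgroup.map_commutator, Subgroup.map_top_of_surjective π hπ]
  have hcG : ∀ a b : G, ⁅a, b⁆ ∈ commutator G := fun a b =>
    Subgroup.commutator_mem_commutator (Subgroup.mem_top a) (Subgroup.mem_top b)
  have hcE : ∀ a b : E, ⁅a, b⁆ ∈ commutator E := fun a b =>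
    Subgroup.commutator_mem_commutator (Subgroup.mem_top a) (Subgroup.mem_top b)
  have hπc : ∀ w ∈ commutator E, π w ∈ commutator G := fun w hw =>
    hmap ▸ Subgroup.mem_map_of_mem π hw
  -- commutators with elements of the derived subgroup are central
  have hk3 : ∀ w ∈ commutator E, ∀ y : E, ⁅y, w⁆ ∈ π.ker := by
    intro w hw y
    rw [MonoidHom.mem_ker, map_commutatorElement, comm_eq_one_right (hcl (hπc w hw))]
  have hc3 : ∀ w ∈ commutator E, ∀ y : E, ⁅y, w⁆ ∈ Subgroup.center E := fun w hw y =>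
    hker (hk3 w hw y)
  -- decomposition
  have hdec : ∀ y : E, π y ∈ commutator G → ∃ w ∈ commutator E, ∃ z ∈ Subgroup.center E,
      y = w * z := by
    intro y hy
    rw [← hmap] at hy
    obtain ⟨w, hw, hwy⟩ := hy
    refine ⟨w, hw, w⁻¹ * y, hker ?_, by group⟩
    rw [MonoidHom.mem_ker, map_mul, map_inv, hwy, inv_mul_cancel]
  have hcomm_eq : ∀ y w w' : E, π w = π w' → ⁅y, w⁆ = ⁅y, w'⁆ := by
    intro y w w' h
    have hz : w'⁻¹ * w ∈ Subgroup.center E := hker (by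
      rw [MonoidHom.mem_ker, map_mul, map_inv, h, inv_mul_cancel])
    have h1 : ⁅y, w'⁻¹ * w⁆ = 1 := comm_eq_one_right hz
    have : w = w' * (w'⁻¹ * w) := by group
    rw [this, comm_mul_right_of_central (by rw [h1]; exact Subgroup.one_mem _), h1, mul_one]
  let L : Subgroup E := ⁅(⊤ : Subgroup E), commutator E⁆
  have hLk : L ≤ π.ker := by
    rw [Subgroup.commutator_le]
    intro y _ w hw
    exact hk3 w hw y
  have hLc : L ≤ Subgroup.center E := hLk.trans hker
  have hLmem : ∀ w ∈ commutator E, ∀ y : E, ⁅y, w⁆ ∈ L := fun w hw y =>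
    Subgroup.commutator_mem_commutator (Subgroup.mem_top y) hw
  have h22 : ∀ w ∈ commutator E, ∀ w' ∈ commutator E, ⁅w, w'⁆ = 1 := by
    have h1 : ⁅⁅(⊤ : Subgroup E), commutator E⁆, (⊤ : Subgroup E)⁆ = ⊥ :=
      Subgroup.commutator_top_right_eq_bot_iff_le_center.2 hLc
    have h2 : ⁅⁅commutator E, (⊤ : Subgroup E)⁆, (⊤ : Subgroup E)⁆ = ⊥ := by
      rw [Subgroup.commutator_comm (commutator E)]; exact h1
    have h3 := Subgroup.commutator_commutator_eq_bot_of_rotate h1 h2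
    intro w hw w' hw'
    have : ⁅w, w'⁆ ∈ ⁅⁅(⊤ : Subgroup E), (⊤ : Subgroup E)⁆, commutator E⁆ :=
      Subgroup.commutator_mem_commutator hw hw'
    rw [h3] at this
    exact this
  have hpow : ∀ w ∈ commutator E, ∀ y : E, ⁅y, w⁆ ^ p = 1 := by
    intro w hw y
    rw [← comm_pow_left (hc3 w hw)]
    obtain ⟨v, hv, z, hz, h⟩ := hdec (y ^ p) (by rw [map_pow]; exact hGp _)
    rw [h, comm_mul_left_of_central (by rw [comm_eq_one_left hz]; exact Subgroup.one_mem _),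
      comm_eq_one_left hz, h22 v hv w hw, mul_one]
  have hLp : ∀ c : L, c ^ p = 1 := by
    let S : Subgroup E :=
      { carrier := {y | y ∈ Subgroup.center E ∧ y ^ p = 1}
        one_mem' := ⟨Subgroup.one_mem _, one_pow _⟩
        mul_mem' := fun {a b} ha hb => ⟨Subgroup.mul_mem _ ha.1 hb.1, by
          rw [(show Commute a b from Subgroup.mem_center_iff.1 hb.1 a).mul_pow, ha.2, hb.2, one_mul]⟩
        inv_mem' := fun {a} ha => ⟨Subgroup.inv_mem _ ha.1, by rw [inv_pow, ha.2, inv_one]⟩ }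
    have hS : L ≤ S := by
      rw [Subgroup.commutator_le]
      intro y _ w hw
      exact ⟨hc3 w hw y, hpow w hw y⟩
    intro c
    exact Subtype.ext (hS c.2).2
  choose xt hxt using fun i => hπ (x i)
  have hgen : Subgroup.closure (Set.range xt ∪ Subgroup.center E) = ⊤ := by
    rw [eq_top_iff]
    intro y _
    have h1 : π y ∈ (Subgroup.closure (Set.range xt)).map π := by
      rw [MonoidHom.map_closure, ← Set.range_comp]
      have : (π ∘ xt) = x := funext hxt
      rw [this, hx]; exact Subgroup.mem_top _
    obtain ⟨v, hv, hvy⟩ := h1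
    have h2 : v⁻¹ * y ∈ Subgroup.center E := hker (by
      rw [MonoidHom.mem_ker, map_mul, map_inv, hvy, inv_mul_cancel])
    have : y = v * (v⁻¹ * y) := by group
    rw [this]
    exact Subgroup.mul_mem _ (Subgroup.closure_mono Set.subset_union_left hv)
      (Subgroup.subset_closure (Or.inr h2))
  have hgenG : Subgroup.closure (Set.range x ∪ Subgroup.center G) = ⊤ := by
    rw [eq_top_iff, ← hx]
    exact Subgroup.closure_mono Set.subset_union_left
  have hσ : ∀ g : commutator G, ∃ w : E, w ∈ commutator E ∧ π w = g := by
    intro g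
    have hg : (g : G) ∈ (commutator E).map π := by rw [hmap]; exact g.2
    exact hg
  choose σ hσ1 hσ2 using hσ
  let _ : CommGroup (commutator G) := centralCommGroup _ hcl
  let _ : CommGroup L := centralCommGroup _ hLc
  let t : Fin d → commutator G →* L := fun m => MonoidHom.mk'
    (fun g => ⟨⁅xt m, σ g⁆, hLmem _ (hσ1 g) _⟩) (by
      intro g h
      apply Subtype.ext
      change ⁅xt m, σ (g * h)⁆ = ⁅xt m, σ g⁆ * ⁅xt m, σ h⁆
      rw [← comm_mul_right_of_central (hc3 _ (hσ1 h) _)]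
      apply hcomm_eq
      rw [map_mul, hσ2, hσ2, hσ2]
      rfl)
  have ht : ∀ m a b, ((t m ⟨⁅x a, x b⁆, hcG _ _⟩ : L) : E) = ⁅xt m, ⁅xt a, xt b⁆⁆ := by
    intro m a b
    change ⁅xt m, σ _⁆ = _
    apply hcomm_eq
    rw [hσ2, map_commutatorElement, hxt, hxt]
  have hcomm3 : ∀ a b : E, ∀ w ∈ commutator E, ⁅a * b * a⁻¹, w⁆ = ⁅b, w⁆ := by
    intro a b w hw
    rw [comm_mul_left_of_central (hc3 w hw _), comm_mul_left_of_central (hc3 w hw _),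
      ← Subgroup.mem_center_iff.1 (hc3 w hw a), mul_assoc, ← comm_mul_left_of_central (hc3 w hw _),
      mul_inv_cancel, commutatorElement_one_left, mul_one]
  have hJ := jacobi_bound_group (p := p) (W := commutator G) (T := L)
    (fun c => Subtype.ext (comm_pow_eq_one hcl (fun q => hcl (hGp q)) c.2)) hLp hk
    (fun a b => ⟨⁅x a, x b⁆, hcG _ _⟩)
    (fun a => Subtype.ext (commutatorElement_self _))
    (fun a b => Subtype.ext (commutatorElement_inv _ _).symm)
    (fun S hS => map_subtype_top (comm_le_of_gens hcl hgenG
      (fun i j => ⟨⟨⁅x i, x j⁆, hcG _ _⟩, hS i j, rfl⟩)))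
    t
    (fun a b e => by
      apply Subtype.ext
      change ((t a _ : L) : E) * ((t b _ : L) : E) * ((t e _ : L) : E) = 1
      rw [ht, ht, ht]
      have h := commutatorElement_conj_commutatorElement_mul (xt e) (xt a) (xt b)
      rw [hcomm3 _ _ _ (hcE _ _), hcomm3 _ _ _ (hcE _ _), hcomm3 _ _ _ (hcE _ _)] at h
      rw [← h, mul_assoc, mul_assoc]
      congr 1
      exact (Subgroup.mem_center_iff.1 (hc3 _ (hcE _ _) _) _))
    (fun S hS => by
      apply map_subtype_top
      rw [Subgroup.commutator_le]
      intro y _ w hw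
      apply leftSub_eq_top (hc3 w hw) hgen
      intro m
      refine ⟨_, hS m ⟨π w, hπc w hw⟩, ?_⟩
      change ⁅xt m, σ _⁆ = _
      apply hcomm_eq
      rw [hσ2])
    hdk
  obtain ⟨⟨r, hr, hr2⟩, hkd⟩ := hJ
  refine ⟨?_, hkd⟩
  -- the quotient by the third term
  have hQc : commutator (E ⧸ L) = (commutator E).map (QuotientGroup.mk' L) := by
    exact map_derived _ (QuotientGroup.mk'_surjective L)
  have hQcl : commutator (E ⧸ L) ≤ Subgroup.center (E ⧸ L) := by
    rw [hQc]
    rintro _ ⟨w, hw, rfl⟩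
    rw [Subgroup.mem_center_iff]
    intro q
    obtain ⟨y, rfl⟩ := QuotientGroup.mk'_surjective L q
    rw [← commutatorElement_eq_one_iff_mul_comm, ← map_commutatorElement]
    exact (QuotientGroup.eq_one_iff _).2 (hLmem w hw y)
  have hQz : ∀ z ∈ Subgroup.center E, QuotientGroup.mk' L z ∈ Subgroup.center (E ⧸ L) := by
    intro z hz
    rw [Subgroup.mem_center_iff]
    intro q
    obtain ⟨y, rfl⟩ := QuotientGroup.mk'_surjective L q
    rw [← map_mul, ← map_mul, Subgroup.mem_center_iff.1 hz y]
  have hQp : ∀ q : E ⧸ L, q ^ p ∈ Subgroup.center (E ⧸ L) := by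
    intro q
    obtain ⟨y, rfl⟩ := QuotientGroup.mk'_surjective L q
    obtain ⟨v, hv, z, hz, h⟩ := hdec (y ^ p) (by rw [map_pow]; exact hGp _)
    rw [← map_pow, h, map_mul]
    refine Subgroup.mul_mem _ (hQcl ?_) (hQz z hz)
    rw [hQc]
    exact Subgroup.mem_map_of_mem _ hv
  have hQgen : Subgroup.closure (Set.range (fun i => QuotientGroup.mk' L (xt i)) ∪
      Subgroup.center (E ⧸ L)) = ⊤ := by
    rw [eq_top_iff]
    refine (top_le_map_closure _ (QuotientGroup.mk'_surjective L) hgen).trans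
      (Subgroup.closure_mono ?_)
    rintro _ ⟨y, (⟨i, rfl⟩ | hy), rfl⟩
    · exact Or.inl ⟨i, rfl⟩
    · exact Or.inr (hQz y hy)
  obtain ⟨hQfin, hQcard⟩ := card_comm_class_two (p := p) hQcl hQp _ hQgen
  have e1 := card_map_mul_card_inf_ker (QuotientGroup.mk' L) (commutator E)
  have hLE : L ≤ commutator E := Subgroup.commutator_le_right _ _
  rw [QuotientGroup.ker_mk', inf_eq_right.2 hLE, ← hQc, hr] at e1
  have e2 := card_map_mul_card_inf_ker π (commutator E)
  rw [hmap, hk, e1] at e2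
  have hpos : 0 < Nat.card (commutator (E ⧸ L)) := Nat.card_pos
  have hne : Nat.card (commutator E ⊓ π.ker : Subgroup E) ≠ 0 := by
    intro h0
    rw [h0, mul_zero] at e2
    have : 0 < Nat.card (commutator (E ⧸ L)) * p ^ r := Nat.mul_pos hpos (pow_pos hpp.pos _)
    omega
  refine ⟨Nat.finite_of_card_ne_zero hne, ?_⟩
  have hle : p ^ k * Nat.card (commutator E ⊓ π.ker : Subgroup E)
      ≤ p ^ k * p ^ ((d - 1) * (k + 1)) := by
    rw [← e2, ← pow_add]
    refine (Nat.mul_le_mul_right _ hQcard).trans ?_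
    rw [← pow_add]
    apply Nat.pow_le_pow_right hpp.pos
    cases d with
    | zero => simp at hr2 ⊢; omega
    | succ n =>
      have : (n + 1).choose 2 = n + n.choose 2 := by
        rw [Nat.choose_succ_succ' n 1, Nat.choose_one_right]
      simp only [Nat.add_sub_cancel] at hr2 ⊢
      rw [this]
      nlinarith
  exact Nat.le_of_mul_le_mul_left hle (pow_pos hpp.pos _)

theorem divisible_units : Nonempty (DivisibleBy (Additive ℂˣ) ℤ) := by
  refine ⟨divisibleByOfSMulRightSurj _ _ ?_⟩
  intro n hn a
  obtain ⟨z, hz⟩ := IsAlgClosed.exists_pow_nat_eq (a.toMul : ℂ) (Int.natAbs_pos.2 hn)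
  have hz0 : z ≠ 0 := by
    rintro rfl
    rw [zero_pow (Int.natAbs_ne_zero.2 hn)] at hz
    exact a.toMul.ne_zero hz.symm
  have hu : (Units.mk0 z hz0) ^ n.natAbs = a.toMul := Units.ext (by simpa using hz)
  rcases Int.natAbs_eq n with h | h
  · refine ⟨Additive.ofMul (Units.mk0 z hz0), congrArg Additive.ofMul (?_ : _ ^ n = a.toMul)⟩
    rw [h, zpow_natCast]
    exact hu
  · refine ⟨Additive.ofMul (Units.mk0 z hz0)⁻¹, congrArg Additive.ofMul (?_ : _ ^ n = a.toMul)⟩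
    rw [h, zpow_neg, zpow_natCast, toMul_ofMul, inv_pow, inv_inv, hu]

theorem extend_character {E : Type*} [Group E] (K : Subgroup E) (χ : K →* ℂˣ)
    (h : ∀ k : K, (k : E) ∈ commutator E → χ k = 1) : ∃ f : E →* ℂˣ, ∀ k : K, f k = χ k := by
  obtain ⟨hdiv⟩ := divisible_units
  let j : K →* Abelianization E := Abelianization.of.comp K.subtype
  have hj : j.ker ≤ χ.ker := by
    intro k hk
    rw [MonoidHom.mem_ker] at hk ⊢
    apply h
    have : (k : E) ∈ (Abelianization.of (G := E)).ker := hk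
    rwa [Abelianization.ker_of] at this
  let χ' : j.range →* ℂˣ := (QuotientGroup.lift j.ker χ hj).comp
    (QuotientGroup.quotientKerEquivRange j).symm.toMonoidHom
  obtain ⟨f, hf⟩ := (Module.Baer.of_divisible (Additive ℂˣ)).extension_property_addMonoidHom
    (MonoidHom.toAdditive j.range.subtype) (by
      intro a b hab
      exact Subtype.ext hab) (MonoidHom.toAdditive χ')
  refine ⟨(MonoidHom.toAdditive.symm f).comp Abelianization.of, fun k => ?_⟩
  have h1 := DFunLike.congr_fun hf (Additive.ofMul (⟨j k, k, rfl⟩ : j.range))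
  have h2 : χ' ⟨j k, k, rfl⟩ = χ k := by
    have : (QuotientGroup.quotientKerEquivRange j).symm ⟨j k, k, rfl⟩ = QuotientGroup.mk k := by
      rw [MulEquiv.symm_apply_eq]; rfl
    change QuotientGroup.lift j.ker χ hj ((QuotientGroup.quotientKerEquivRange j).symm _) = _
    rw [this]; rfl
  rw [← h2]
  exact congrArg Additive.toMul h1

/-- Normalization-free two-cocycles with trivial action. -/
structure Cocyc (G A : Type*) [Group G] [CommGroup A] where
  f : G → G → A
  h : ∀ a b c, f (a * b) c * f a b = f b c * f a (b * c)

/-- The central extension attached to a two-cocycle. -/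
@[ext] structure CExt {G A : Type*} [Group G] [CommGroup A] (u : Cocyc G A) where
  fst : G
  snd : A

namespace CExt

variable {G A : Type*} [Group G] [CommGroup A] (u : Cocyc G A)

theorem one_left (g : G) : u.f 1 g = u.f 1 1 := by
  have := u.h 1 1 g
  simp only [one_mul] at this
  exact (mul_left_cancel this).symm

theorem one_right (g : G) : u.f g 1 = u.f 1 1 := by
  have := u.h g 1 1
  simp only [mul_one] at this
  exact mul_right_cancel this

instance : Mul (CExt u) := ⟨fun x y => ⟨x.fst * y.fst, x.snd * y.snd * u.f x.fst y.fst⟩⟩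
instance : One (CExt u) := ⟨⟨1, (u.f 1 1)⁻¹⟩⟩
instance : Inv (CExt u) :=
  ⟨fun x => ⟨x.fst⁻¹, x.snd⁻¹ * (u.f 1 1)⁻¹ * (u.f x.fst⁻¹ x.fst)⁻¹⟩⟩

theorem mul_def (x y : CExt u) : x * y = ⟨x.fst * y.fst, x.snd * y.snd * u.f x.fst y.fst⟩ := rfl
theorem one_def : (1 : CExt u) = ⟨1, (u.f 1 1)⁻¹⟩ := rfl
theorem inv_def (x : CExt u) :
    x⁻¹ = ⟨x.fst⁻¹, x.snd⁻¹ * (u.f 1 1)⁻¹ * (u.f x.fst⁻¹ x.fst)⁻¹⟩ := rfl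

instance : Group (CExt u) := Group.ofLeftAxioms
  (by
    intro x y z
    simp only [mul_def, CExt.mk.injEq]
    refine ⟨mul_assoc _ _ _, ?_⟩
    have := u.h x.fst y.fst z.fst
    calc _ = x.snd * y.snd * z.snd * (u.f (x.fst * y.fst) z.fst * u.f x.fst y.fst) := by
          simp only [mul_assoc, mul_comm, mul_left_comm]
      _ = _ := by rw [this]; simp only [mul_assoc])
  (by
    intro x
    simp only [mul_def, one_def, one_left, one_mul]
    ext
    · rfl
    · simp only; rw [mul_assoc, mul_comm, mul_assoc, mul_inv_cancel, mul_one])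
  (by
    intro x
    simp only [mul_def, one_def, inv_def]
    ext
    · simp
    · simp only
      rw [mul_assoc, mul_comm x.snd, mul_assoc _ _ (u.f _ _ * _), inv_mul_cancel_left,
        mul_right_comm, inv_mul_cancel, one_mul])

/-- The projection of the extension. -/
def proj : CExt u →* G := MonoidHom.mk' CExt.fst fun _ _ => rfl

theorem proj_surj : Function.Surjective (proj u) := fun g => ⟨⟨g, 1⟩, rfl⟩

theorem proj_ker : (proj u).ker ≤ Subgroup.center (CExt u) := by
  intro x hx
  have hx1 : x.fst = 1 := hx
  rw [Subgroup.mem_center_iff]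
  intro y
  simp only [mul_def, hx1, one_left, one_right, one_mul, mul_one, mul_comm]

/-- Identification of the kernel with the coefficients. -/
def kap : (proj u).ker →* A := MonoidHom.mk' (fun x => x.1.snd * u.f 1 1) (by
  intro x y
  have hx : x.1.fst = 1 := x.2
  have hy : y.1.fst = 1 := y.2
  change (x.1.snd * y.1.snd * u.f x.1.fst y.1.fst) * u.f 1 1 = _
  rw [hx, hy]
  simp only [mul_assoc, mul_comm, mul_left_comm])

theorem mul_lift (g h : G) : (⟨g, 1⟩ : CExt u) * ⟨h, 1⟩ =
    ⟨g * h, 1⟩ * ⟨1, u.f g h * (u.f 1 1)⁻¹⟩ := by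
  simp only [mul_def, one_right, mul_one, one_mul, inv_mul_cancel_right]

theorem kap_apply (a : A) : kap u ⟨⟨1, a * (u.f 1 1)⁻¹⟩, rfl⟩ = a :=
  inv_mul_cancel_right a (u.f 1 1)

end CExt

theorem hom_div_one {X : Type*} [AddCommGroup X] (φ : Multiplicative X →* ℂˣ)
    {a b : Multiplicative X} (h : φ a = φ b) : φ (a / b) = 1 := by
  rw [map_div, h, div_self']

open groupCohomology in
theorem schur_card_le {G : Type} [Group G] (N : ℕ)
    (hN : ∀ (E : Type) [Group E] (π : E →* G), Function.Surjective π →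
      π.ker ≤ Subgroup.center E → Finite (commutator E ⊓ π.ker : Subgroup E) ∧
      Nat.card (commutator E ⊓ π.ker : Subgroup E) ≤ N) :
    Nat.card (schurMultiplier G) ≤ N := by
  let R := Rep.trivial ℤ G (Additive ℂˣ)
  let Z := cocycles₂ R
  let A := Multiplicative Z →* ℂˣ
  let ev : Z → G → G → ℂˣ := fun z g h => Additive.toMul (z (g, h) : Additive ℂˣ)
  have evc : ∀ z a b c, ev z (a * b) c * ev z a b = ev z b c * ev z a (b * c) := by
    intro z a b c
    exact congrArg Additive.toMul ((mem_cocycles₂_iff (A := R) z.1).1 z.2 a b c)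
  let u : Cocyc G A :=
    { f := fun g h => MonoidHom.mk' (fun z => ev z.toAdd g h) (fun z z' => rfl)
      h := fun a b c => MonoidHom.ext fun z => evc z.toAdd a b c }
  obtain ⟨hfin, hcard⟩ := hN (CExt u) (CExt.proj u) (CExt.proj_surj u) (CExt.proj_ker u)
  set D : Subgroup (CExt u) := commutator (CExt u) ⊓ (CExt.proj u).ker with hD
  let evh : Multiplicative Z → A →* ℂˣ := fun z => MonoidHom.eval z
  let χ : Multiplicative Z → (CExt.proj u).ker →* ℂˣ := fun z => (evh z).comp (CExt.kap u)
  let Ψ : Multiplicative Z → (D →* ℂˣ) := fun z =>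
    (χ z).comp (Subgroup.inclusion inf_le_right)
  have hcob : ∀ z : Multiplicative Z, (∀ x, Ψ z x = 1) → (z.toAdd : G × G → Additive ℂˣ) ∈
      coboundaries₂ R := by
    intro z hz
    obtain ⟨f, hf⟩ := extend_character (CExt.proj u).ker (χ z) (by
      intro k hk
      exact hz ⟨k.1, hk, k.2⟩)
    let s : G → ℂˣ := fun g => f ⟨g, 1⟩
    have hs : ∀ g h, s g * s h = s (g * h) * ev z.toAdd g h := by
      intro g h
      let w : (CExt.proj u).ker := ⟨⟨1, u.f g h * (u.f 1 1)⁻¹⟩, rfl⟩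
      have h1 : (⟨g, 1⟩ : CExt u) * ⟨h, 1⟩ = ⟨g * h, 1⟩ * w.1 :=
        CExt.mul_lift u g h
      have h2 : f w = ev z.toAdd g h := by
        rw [hf]
        exact congrArg (evh z) (CExt.kap_apply u (u.f g h))
      change f _ * f _ = f _ * _
      rw [← map_mul, h1, map_mul, h2]
    refine ⟨fun g => Additive.ofMul (s g), ?_⟩
    funext q
    obtain ⟨g, h⟩ := q
    have h3 : s h / s (g * h) * s g = ev z.toAdd g h := by
      rw [div_mul_eq_mul_div, div_eq_iff_eq_mul, mul_comm (s h), hs, mul_comm]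
    exact congrArg Additive.ofMul h3
  have hsurj : ∀ y : H2 R, ∃ z : Z, H2π R z = y := fun y =>
    H2_induction_on y (fun x => ⟨x, rfl⟩)
  choose rep hrep using hsurj
  let Φ : H2 R → (D →* ℂˣ) := fun y => Ψ (Multiplicative.ofAdd (rep y))
  have hΦ : Function.Injective Φ := by
    intro y y' hyy
    rw [← hrep y, ← hrep y', H2π_eq_iff]
    refine hcob (Multiplicative.ofAdd (rep y - rep y')) ?_
    intro x
    have h1 : Ψ (Multiplicative.ofAdd (rep y)) x = Ψ (Multiplicative.ofAdd (rep y')) x :=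
      DFunLike.congr_fun hyy x
    have hm : ∀ (φ : Multiplicative Z →* ℂˣ) (a b : Multiplicative Z), φ a = φ b →
        φ (a / b) = 1 := fun φ a b h => hom_div_one φ h
    exact hm (CExt.kap u (Subgroup.inclusion inf_le_right x)) _ _ h1
  let _ : CommGroup D := centralCommGroup D (inf_le_right.trans (CExt.proj_ker u))
  have hDD : Nat.card (D →* ℂˣ) = Nat.card D :=
    CommGroup.card_monoidHom_of_hasEnoughRootsOfUnity D ℂ
  have hfin2 : Finite (D →* ℂˣ) := Nat.finite_of_card_ne_zero (by
    rw [hDD]; exact Nat.card_pos.ne')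
  exact (Nat.card_le_card_of_injective Φ hΦ).trans (hDD.le.trans hcard)


/-- Corollary 2, upper bound in the case `d ≤ k + 1`:
`|M(G)| ≤ p ^ ((d - 1) * (k + 1))`. -/
theorem schur_multiplier_upper_bound_class_two_d_le (p k d : ℕ) (hp : p.Prime)
    (G : Type) [Group G] [Finite G] [Group.IsNilpotent G]
    (hpG : IsPGroup p G)
    (hc : Group.nilpotencyClass G = 2)
    (hGp : Subgroup.closure (Set.range fun x : G => x ^ p) ≤ commutator G)
    (hk : Nat.card (commutator G) = p ^ k)
    (hd : Group.rank G = d)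
    (hdk : d ≤ k + 1) :
    (Nat.card (schurMultiplier G) : ℝ) ≤ (p : ℝ) ^ (((d : ℝ) - 1) * ((k : ℝ) + 1)) := by
  have : Fact p.Prime := ⟨hp⟩
  have h2 : (⊤ : Subgroup G).lowerCentralSeries 2 = ⊥ := by
    rw [← hc]; exact Subgroup.lowerCentralSeries_nilpotencyClass
  have hcl : commutator G ≤ Subgroup.center G := by
    rw [← Subgroup.commutator_top_right_eq_bot_iff_le_center, ← h2]
    rfl
  have hne : commutator G ≠ ⊥ := by
    intro h
    have h1 : (⊤ : Subgroup G).lowerCentralSeries 1 = ⊥ := by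
      rw [← h]; exact Subgroup.top_lowerCentralSeries_one
    have := Subgroup.lowerCentralSeries_eq_bot_iff_nilpotencyClass_le.1 h1
    omega
  have hk1 : k ≠ 0 := by
    rintro rfl
    rw [pow_zero] at hk
    exact hne (Subgroup.card_eq_one.1 hk)
  obtain ⟨S, hS, hSgen⟩ := Group.rank_spec G
  rw [hd] at hS
  let e : Fin d ≃ S := (S.equivFinOfCardEq hS).symm
  let x : Fin d → G := fun i => e i
  have hx : Subgroup.closure (Set.range x) = ⊤ := by
    rw [← hSgen]
    congr 1
    ext g
    constructor
    · rintro ⟨i, rfl⟩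
      exact (e i).2
    · intro hg
      exact ⟨e.symm ⟨g, hg⟩, by simp [x]⟩
  have hGp' : ∀ g : G, g ^ p ∈ commutator G := fun g => hGp (Subgroup.subset_closure ⟨g, rfl⟩)
  have hmain := schur_card_le (G := G) (p ^ ((d - 1) * (k + 1))) (fun E _ π hπ hker =>
    (central_ext_bound π hπ hker hcl hGp' hk x hx hdk).1)
  have hkd := (central_ext_bound (MonoidHom.id G) Function.surjective_id (by
    rw [MonoidHom.ker_id]; exact bot_le) hcl hGp' hk x hx hdk).2
  have hd1 : 1 ≤ d := by
    by_contra h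
    have : d = 0 := by omega
    subst this
    simp at hkd
    exact hk1 hkd
  have hcast : (p : ℝ) ^ (((d : ℝ) - 1) * ((k : ℝ) + 1)) = ((p ^ ((d - 1) * (k + 1)) : ℕ) : ℝ) := by
    push_cast
    rw [← Real.rpow_natCast]
    congr 1
    push_cast [Nat.cast_sub hd1]
    ring
  rw [hcast]
  exact_mod_cast hmain
end

section
/- Let p be a prime and G a finite p-group of nilpotency class 2 such that G^p ≤ γ₂(G), with |γ₂(G)| = p^k and d(G) = d. If d ≥ k + 1, then |M(G)| ≤ p^{(1/2)d(d-1) + (1/2)k(k+1)}. -/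
open scoped commutatorElement

namespace SchurBound



section Dual

variable {G W : Type} [Group G] [CommGroup W]

/-- Pairings `G × W → ℂˣ` satisfying the Jacobi-type identity relative to `B`. -/
def jacobi (B : G → G → W) : Subgroup (G →* (W →* ℂˣ)) where
  carrier := {φ | ∀ x y z, φ x (B y z) * φ y (B z x) * φ z (B x y) = 1}
  one_mem' := by intro x y z; simp
  mul_mem' := by
    intro φ ψ h1 h2 x y z
    have := congrArg₂ (· * ·) (h1 x y z) (h2 x y z)
    simp only [MonoidHom.mul_apply]
    simp only [mul_one] at this
    rw [← this]; ac_rfl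
  inv_mem' := by
    intro φ h1 x y z
    have := congrArg (·⁻¹) (h1 x y z)
    simp only [MonoidHom.inv_apply]
    simp only [inv_one, mul_inv] at this
    exact this

/-- Pairings that are trivial on `G × U`. -/
def vanish (G : Type) [Group G] (U : Subgroup W) : Subgroup (G →* (W →* ℂˣ)) where
  carrier := {φ | ∀ x, ∀ u ∈ U, φ x u = 1}
  one_mem' := by intro x y z; simp
  mul_mem' := by
    intro φ ψ h1 h2 x u hu
    simp [h1 x u hu, h2 x u hu]
  inv_mem' := by
    intro φ h1 x u hu
    simp [h1 x u hu]

/-- Pairings `φ` with `φ y` trivial on `U`. -/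
def vanishAt (y : G) (U : Subgroup W) : Subgroup (G →* (W →* ℂˣ)) where
  carrier := {φ | ∀ u ∈ U, φ y u = 1}
  one_mem' := by intro x y; simp
  mul_mem' := by
    intro φ ψ h1 h2 u hu
    simp [h1 u hu, h2 u hu]
  inv_mem' := by
    intro φ h1 u hu
    simp [h1 u hu]

instance finHom [Finite W] : Finite (W →* ℂˣ) := by
  apply Nat.finite_of_card_ne_zero
  rw [CommGroup.card_monoidHom_of_hasEnoughRootsOfUnity W ℂ]
  exact Nat.card_pos.ne'

instance finPair [Finite G] [Finite W] : Finite (G →* (W →* ℂˣ)) :=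
  Finite.of_injective (fun φ => (φ : G → (W →* ℂˣ))) DFunLike.coe_injective

lemma card_step [Finite G] [Finite W] (H : Subgroup (G →* (W →* ℂˣ))) (y : G) (U W2 : Subgroup W)
    (hH : H ≤ vanish G U) :
    Nat.card H ≤ U.relIndex W2 * Nat.card (H ⊓ vanishAt y W2 : Subgroup _) := by
  let f : (G →* (W →* ℂˣ)) →* (W2 →* ℂˣ) :=
    (MonoidHom.domRestrictHom W2 ℂˣ).comp (MonoidHom.eval y)
  have hf : ∀ φ (w : W2), f φ w = φ y w := fun φ w => rfl
  have h1 : f.ker = vanishAt y W2 := by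
    ext φ
    constructor
    · intro h u hu
      have := DFunLike.congr_fun (MonoidHom.mem_ker.1 h) ⟨u, hu⟩
      exact this
    · intro h
      rw [MonoidHom.mem_ker]
      ext u
      exact congrArg Units.val (h u u.2)
  have h2 : Nat.card (H.map f) ≤ U.relIndex W2 := by
    rw [Subgroup.relIndex, Subgroup.index, ← CommGroup.card_domRestrictHom_ker ℂ]
    apply Subgroup.card_le_of_le
    rintro _ ⟨φ, hφ, rfl⟩
    rw [MonoidHom.mem_ker]
    ext u
    exact congrArg Units.val (hH hφ y u.1.1 u.2)
  have h3 : Nat.card H = Nat.card (H.map f) * Nat.card (H ⊓ vanishAt y W2 : Subgroup _) := by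
    rw [← Subgroup.relIndex_ker, h1, ← Subgroup.relIndex_bot_left, ← Subgroup.relIndex_bot_left,
      mul_comm]
    rw [← Subgroup.inf_relIndex_left H (vanishAt y W2)]
    exact (Subgroup.relIndex_mul_relIndex (⊥ : Subgroup (G →* (W →* ℂˣ))) _ _ bot_le inf_le_left).symm
  rw [h3]
  gcongr

lemma inner [Finite G] [Finite W] {p : ℕ} (hp : p.Prime) (B : G → G → W)
    (hB : ∀ x y, B x y = (B y x)⁻¹) (W1 : Subgroup W) (y : G) (W2 : Subgroup W)
    (hW2 : W2 = W1 ⊔ Subgroup.closure (Set.range (B y))) (t : ℕ) :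
    ∀ U : Subgroup W, W1 ≤ U → U ≤ W2 → U.relIndex W2 = p ^ t →
    Nat.card (jacobi B ⊓ vanish G U ⊓ vanishAt y ⊤ : Subgroup _) ≤
      p ^ (t * (t + 1) / 2) * Nat.card (jacobi B ⊓ vanish G W2 : Subgroup _) := by
  induction t using Nat.strong_induction_on with
  | _ t ih =>
  intro U h1 h2 h3
  by_cases hU : W2 ≤ U
  · have : U = W2 := le_antisymm h2 hU
    subst this
    calc _ ≤ Nat.card (jacobi B ⊓ vanish G U : Subgroup _) := Subgroup.card_le_of_le inf_le_left
      _ ≤ _ := Nat.le_mul_of_pos_left _ (pow_pos hp.pos _)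
  · have hz : ∃ z, B y z ∉ U := by
      by_contra! hz
      apply hU
      rw [hW2, sup_le_iff, Subgroup.closure_le]
      refine ⟨h1, ?_⟩
      rintro _ ⟨z, rfl⟩
      exact hz z
    obtain ⟨z, hz⟩ := hz
    have hmem : ∀ x, B y x ∈ W2 := fun x => by
      rw [hW2]
      exact Subgroup.mem_sup_right (Subgroup.subset_closure ⟨x, rfl⟩)
    let U' := U ⊔ Subgroup.zpowers (B y z)
    have hU' : U' ≤ W2 := sup_le h2 (by rw [Subgroup.zpowers_le]; exact hmem z)
    have hUU' : U ≤ U' := le_sup_left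
    have hmul := Subgroup.relIndex_mul_relIndex U U' W2 hUU' hU'
    obtain ⟨s, hs, hs'⟩ := (Nat.dvd_prime_pow hp).1 (h3 ▸ Dvd.intro_left _ hmul)
    have hne : U.relIndex U' ≠ 1 := by
      rw [Ne, Subgroup.relIndex_eq_one]
      intro h
      exact hz (h (Subgroup.mem_sup_right (Subgroup.mem_zpowers _)))
    have hst : s < t := by
      rcases hs.lt_or_eq with h | h
      · exact h
      · exfalso
        subst h
        rw [h3, hs'] at hmul
        exact hne (Nat.eq_of_mul_eq_mul_right (pow_pos hp.pos s) (by simpa using hmul))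
    have key := ih s hst U' (h1.trans hUU') hU' hs'
    have step := card_step (jacobi B ⊓ vanish G U ⊓ vanishAt y ⊤) z U W2
      (inf_le_left.trans inf_le_right)
    have hle : jacobi B ⊓ vanish G U ⊓ vanishAt y ⊤ ⊓ vanishAt z W2 ≤
        jacobi B ⊓ vanish G U' ⊓ vanishAt y ⊤ := by
      rintro φ ⟨⟨⟨a, b⟩, c⟩, d⟩
      refine ⟨⟨a, ?_⟩, c⟩
      intro x
      have hU1 : U' ≤ (φ x).ker := by
        refine sup_le (fun u hu => b x u hu) ?_
        rw [Subgroup.zpowers_le, MonoidHom.mem_ker]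
        have := a x y z
        rw [c _ trivial, d (B x y) (by rw [hB]; exact inv_mem (hmem x))] at this
        simpa using this
      exact fun u hu => hU1 hu
    calc _ ≤ p ^ t * Nat.card (jacobi B ⊓ vanish G U' ⊓ vanishAt y ⊤ : Subgroup _) := by
            rw [← h3]
            exact step.trans (Nat.mul_le_mul_left _ (Subgroup.card_le_of_le hle))
      _ ≤ p ^ t * (p ^ (s * (s + 1) / 2) * Nat.card (jacobi B ⊓ vanish G W2 : Subgroup _)) := by
            gcongr
      _ ≤ _ := by
            rw [← mul_assoc, ← pow_add]
            gcongr
            · exact hp.one_le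
            · obtain ⟨r, rfl⟩ : ∃ r, t = s + 1 + r := ⟨t - (s + 1), by omega⟩
              have : s * (s+1) + 2 * (s + 1 + r) ≤ (s + 1 + r) * (s + 1 + r + 1) := by nlinarith
              omega

lemma outer [Finite G] [Finite W] {p : ℕ} (hp : p.Prime) (B : G → G → W)
    (hB : ∀ x y, B x y = (B y x)⁻¹)
    (hgen : Subgroup.closure (Set.range fun q : G × G => B q.1 q.2) = ⊤) (s : ℕ) :
    ∀ W1 : Subgroup W, W1.index = p ^ s →
    Nat.card (jacobi B ⊓ vanish G W1 : Subgroup _) ≤ p ^ (s * (s + 3) / 2) := by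
  induction s using Nat.strong_induction_on with
  | _ s ih =>
  intro W1 h1
  by_cases htop : W1 = ⊤
  · have : (jacobi B ⊓ vanish G W1) = ⊥ := by
      rw [eq_bot_iff]
      rintro φ ⟨-, h⟩
      rw [Subgroup.mem_bot]
      ext x w
      exact congrArg Units.val (h x w (htop ▸ trivial))
    rw [this]
    simp only [Subgroup.card_bot]
    exact Nat.one_le_pow _ _ hp.pos
  · have hy : ∃ y z, B y z ∉ W1 := by
      by_contra! hz
      apply htop
      rw [eq_top_iff, ← hgen, Subgroup.closure_le]
      rintro _ ⟨q, rfl⟩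
      exact hz _ _
    obtain ⟨y, z, hyz⟩ := hy
    let W2 := W1 ⊔ Subgroup.closure (Set.range (B y))
    have h12 : W1 ≤ W2 := le_sup_left
    have hmul := Subgroup.relIndex_mul_index h12
    obtain ⟨s', hs, hs'⟩ := (Nat.dvd_prime_pow hp).1 (h1 ▸ Dvd.intro_left _ hmul)
    obtain ⟨r, -, hr'⟩ := (Nat.dvd_prime_pow hp).1 (h1 ▸ Dvd.intro _ hmul)
    have hne : W1.relIndex W2 ≠ 1 := by
      rw [Ne, Subgroup.relIndex_eq_one]
      intro h
      exact hyz (h (Subgroup.mem_sup_right (Subgroup.subset_closure ⟨z, rfl⟩)))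
    have hrs : r + s' = s := by
      rw [hs', hr', h1, ← pow_add] at hmul
      exact Nat.pow_right_injective hp.two_le hmul
    have hr0 : r ≠ 0 := by
      rintro rfl
      exact hne (by simpa using hr')
    have key := ih s' (by omega) W2 hs'
    have inn := inner hp B hB W1 y W2 rfl r W1 le_rfl h12 hr'
    have step := card_step (jacobi B ⊓ vanish G W1) y W1 ⊤ inf_le_right
    rw [Subgroup.relIndex_top_right, h1] at step
    calc _ ≤ p ^ s * (p ^ (r * (r + 1) / 2) * p ^ (s' * (s' + 3) / 2)) :=
            step.trans (Nat.mul_le_mul_left _ (inn.trans (Nat.mul_le_mul_left _ key)))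
      _ ≤ _ := by
            rw [← pow_add, ← pow_add]
            apply Nat.pow_le_pow_right hp.pos
            subst hrs
            obtain ⟨q, rfl⟩ : ∃ q, r = q + 1 := ⟨r - 1, by omega⟩
            have e1 : 2 ∣ (q + 1) * (q + 1 + 1) := (Nat.even_mul_succ_self _).two_dvd
            have : 2 * (q + 1 + s') + (q + 1) * (q + 1 + 1) + s' * (s' + 3) ≤
              (q + 1 + s') * (q + 1 + s' + 3) := by nlinarith
            omega

lemma card_jacobi [Finite G] [Finite W] {p k : ℕ} (hp : p.Prime)
    (B : G → G → W) (hB : ∀ x y, B x y = (B y x)⁻¹)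
    (hgen : Subgroup.closure (Set.range fun q : G × G => B q.1 q.2) = ⊤)
    (hk : Nat.card W = p ^ k) : Nat.card (jacobi B) ≤ p ^ (k * (k + 3) / 2) := by
  have := outer hp B hB hgen k ⊥ (by rw [Subgroup.index_bot, hk])
  have h : vanish G (⊥ : Subgroup W) = ⊤ := by
    rw [eq_top_iff]
    rintro φ - x u hu
    rw [Subgroup.mem_bot.1 hu, map_one]
  rwa [h, inf_top_eq] at this

end Dual
section Coh

variable {G : Type} [Group G]

/-- The multiplicative 2-cocycle identity (trivial action). -/
def IsC (α : G → G → ℂˣ) : Prop :=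
  ∀ g h j, α (g * h) j * α g h = α h j * α g (h * j)

variable (G) in
/-- The group of 2-cocycles. -/
def Z2 : Subgroup (G → G → ℂˣ) where
  carrier := {α | IsC α}
  one_mem' := by intro g h j; simp
  mul_mem' := by
    intro α β h1 h2 g h j
    have := congrArg₂ (· * ·) (h1 g h j) (h2 g h j)
    simp only [Pi.mul_apply] at this ⊢
    rw [mul_mul_mul_comm, this, mul_mul_mul_comm]
  inv_mem' := by
    intro α h1 g h j
    have := congrArg (·⁻¹) (h1 g h j)
    simp only [mul_inv] at this
    exact this

variable (G) in
/-- The group of 2-coboundaries. -/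
def B2 : Subgroup (G → G → ℂˣ) where
  carrier := {α | ∃ f : G → ℂˣ, ∀ g h, α g h = f g * f h / f (g * h)}
  one_mem' := ⟨1, by intro g h; simp⟩
  mul_mem' := by
    rintro α β ⟨f, hf⟩ ⟨f', hf'⟩
    refine ⟨f * f', fun g h => ?_⟩
    simp only [Pi.mul_apply, hf, hf']
    rw [div_mul_div_comm, mul_mul_mul_comm]
  inv_mem' := by
    rintro α ⟨f, hf⟩
    refine ⟨f⁻¹, fun g h => ?_⟩
    simp only [Pi.inv_apply, hf]
    rw [inv_div, div_inv_eq_mul, ← mul_inv, mul_comm _ (f (g * h)), div_eq_mul_inv]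

lemma B2_le_Z2 : B2 G ≤ Z2 G := by
  rintro α ⟨f, hf⟩ g h j
  simp only [hf, div_eq_mul_inv, mul_assoc]
  have e1 : (f (g * h))⁻¹ * f (g * h) = 1 := inv_mul_cancel _
  have e2 : (f (h * j))⁻¹ * f (h * j) = 1 := inv_mul_cancel _
  calc f (g * h) * (f j * ((f (g * (h * j)))⁻¹ * (f g * (f h * (f (g * h))⁻¹))))
      = ((f (g * h))⁻¹ * f (g * h)) * (f j * f g * f h * (f (g * (h * j)))⁻¹) := by ac_rfl
    _ = ((f (h * j))⁻¹ * f (h * j)) * (f j * f g * f h * (f (g * (h * j)))⁻¹) := by rw [e1, e2]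
    _ = _ := by ac_rfl

lemma card_schur : Nat.card (schurMultiplier G) = (B2 G).relIndex (Z2 G) := by
  let A := Rep.trivial ℤ G (Additive ℂˣ)
  let q0 : Additive (Z2 G) →+ groupCohomology.cocycles₂ A :=
    { toFun := fun α => ⟨fun x => Additive.ofMul ((Additive.toMul α).1 x.1 x.2),
          (groupCohomology.mem_cocycles₂_iff (A := A) _).2
            (fun g h j => (Additive.toMul α).2 g h j)⟩
      map_zero' := rfl
      map_add' := fun _ _ => rfl }
  have hq0 : Function.Surjective q0 := by
    intro x
    refine ⟨Additive.ofMul ⟨fun g h => Additive.toMul (x (g, h)), fun g h j => ?_⟩, rfl⟩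
    exact (groupCohomology.mem_cocycles₂_iff (A := A) _).1 x.2 g h j
  let q1 : groupCohomology.cocycles₂ A →+ groupCohomology.H2 A :=
    (groupCohomology.H2π A).hom.toAddMonoidHom
  have hq1 : Function.Surjective q1 := by
    intro x
    induction x using groupCohomology.H2_induction_on with
    | h x => exact ⟨x, rfl⟩
  let q : Z2 G →* Multiplicative (groupCohomology.H2 A) :=
    AddMonoidHom.toMultiplicativeRight (q1.comp q0)
  have hs : Function.Surjective q := hq1.comp hq0
  have hk : q.ker = (B2 G).subgroupOf (Z2 G) := by
    ext α
    rw [MonoidHom.mem_ker, Subgroup.mem_subgroupOf]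
    have h0 : q α = 1 ↔ groupCohomology.H2π A (q0 (Additive.ofMul α)) = 0 := Iff.rfl
    rw [h0, groupCohomology.H2π_eq_zero_iff]
    constructor
    · rintro ⟨f, hf⟩
      refine ⟨fun g => Additive.toMul (f g), fun g h => ?_⟩
      have := congrFun hf (g, h)
      rw [groupCohomology.d₁₂_hom_apply] at this
      have h2 : Additive.ofMul (α.1 g h) = f h - f (g * h) + f g := this.symm
      have h3 := congrArg Additive.toMul h2
      refine h3.trans ?_
      rw [toMul_add, toMul_sub]
      rw [mul_comm, mul_div_assoc]
    · rintro ⟨f, hf⟩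
      refine ⟨fun g => Additive.ofMul (f g), ?_⟩
      funext ⟨g, h⟩
      refine (groupCohomology.d₁₂_hom_apply (A := A) _ _).trans ?_
      change Additive.ofMul (f h) - Additive.ofMul (f (g * h)) + Additive.ofMul (f g) =
        Additive.ofMul (α.1 g h)
      rw [hf, ← ofMul_div, ← ofMul_mul, mul_comm, mul_div_assoc]
  rw [Subgroup.relIndex, ← hk, Subgroup.index_ker, MonoidHom.range_eq_top.2 hs]
  exact (Subgroup.card_top (G := Multiplicative (groupCohomology.H2 A))).symm

/-- Divisibility of `ℂˣ`: embedded copies of `ℂˣ` in abelian groups are retracts. -/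
lemma exists_retraction {H : Type} [CommGroup H] (i : ℂˣ →* H) (hi : Function.Injective i) :
    ∃ r : H →* ℂˣ, ∀ c, r (i c) = c := by
  have hsurj : ∀ n : ℕ, n ≠ 0 → Function.Surjective fun a : Additive ℂˣ => n • a := by
    intro n hn a
    obtain ⟨z, hz⟩ := IsAlgClosed.exists_pow_nat_eq (Additive.toMul a : ℂˣ).val
      (Nat.pos_of_ne_zero hn)
    have hz0 : z ≠ 0 := by
      rintro rfl
      rw [zero_pow hn] at hz
      exact (Additive.toMul a).ne_zero hz.symm
    refine ⟨Additive.ofMul (Units.mk0 z hz0), ?_⟩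
    change Additive.ofMul ((Units.mk0 z hz0) ^ n) = a
    apply Additive.toMul.injective
    ext
    simpa using hz
  let : DivisibleBy (Additive ℂˣ) ℕ := divisibleByOfSMulRightSurj _ _ (fun {n} hn => hsurj n hn)
  let : DivisibleBy (Additive ℂˣ) ℤ := AddGroup.divisibleByIntOfDivisibleByNat _
  obtain ⟨r, hr⟩ := (Module.Baer.of_divisible (Additive ℂˣ)).extension_property_addMonoidHom
    (MonoidHom.toAdditive i) hi (AddMonoidHom.id _)
  refine ⟨MonoidHom.toAdditive.symm r, fun c => ?_⟩
  exact DFunLike.congr_fun hr (Additive.ofMul c)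

lemma IsC.one_left {α : G → G → ℂˣ} (hα : IsC α) (g : G) : α 1 g = α 1 1 := by
  have := hα 1 1 g
  simp only [one_mul] at this
  exact (mul_left_cancel this).symm

lemma IsC.one_right {α : G → G → ℂˣ} (hα : IsC α) (g : G) : α g 1 = α 1 1 := by
  have := hα g 1 1
  simp only [mul_one] at this
  exact mul_right_cancel this

/-- Underlying type of the central extension attached to a function of two variables. -/
@[ext]
structure Ex (G : Type) where
  /-- central component -/
  fst : ℂˣ
  /-- group component -/
  snd : G

/-- The central extension attached to a cocycle. -/
lemma exists_ext {α : G → G → ℂˣ} (hα : IsC α) :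
    ∃ (E : Type) (_ : Group E) (π : E →* G) (i : ℂˣ →* E) (e : G → E),
      Function.Injective i ∧ (∀ c x, i c * x = x * i c) ∧ (∀ c, π (i c) = 1) ∧
      (∀ g, π (e g) = g) ∧ (∀ g h, e g * e h = i (α g h) * e (g * h)) ∧
      (∀ x, ∃ c, x = i c * e (π x)) := by
  let E := Ex G
  let : Mul E := ⟨fun x y => ⟨x.1 * y.1 * α x.2 y.2, x.2 * y.2⟩⟩
  let : One E := ⟨⟨(α 1 1)⁻¹, 1⟩⟩
  let : Inv E := ⟨fun x => ⟨x.1⁻¹ * (α x.2⁻¹ x.2)⁻¹ * (α 1 1)⁻¹, x.2⁻¹⟩⟩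
  have hmul : ∀ x y : E, x * y = ⟨x.1 * y.1 * α x.2 y.2, x.2 * y.2⟩ := fun _ _ => rfl
  have hone : (1 : E) = ⟨(α 1 1)⁻¹, 1⟩ := rfl
  have hinv : ∀ x : E, x⁻¹ = ⟨x.1⁻¹ * (α x.2⁻¹ x.2)⁻¹ * (α 1 1)⁻¹, x.2⁻¹⟩ := fun _ => rfl
  let : Group E := Group.ofLeftAxioms
    (by
      intro x y z
      simp only [hmul]
      refine Ex.ext ?_ (mul_assoc _ _ _)
      have := hα x.2 y.2 z.2
      calc x.1 * y.1 * α x.2 y.2 * z.1 * α (x.2 * y.2) z.2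
          = x.1 * y.1 * z.1 * (α (x.2 * y.2) z.2 * α x.2 y.2) := by ac_rfl
        _ = x.1 * (y.1 * z.1 * α y.2 z.2) * α x.2 (y.2 * z.2) := by rw [this]; ac_rfl)
    (by
      intro x
      rw [hmul, hone]
      refine Ex.ext ?_ (one_mul _)
      change (α 1 1)⁻¹ * x.1 * α 1 x.2 = x.1
      rw [hα.one_left x.2, mul_comm, mul_inv_cancel_left])
    (by
      intro x
      rw [hmul, hinv, hone]
      refine Ex.ext ?_ (inv_mul_cancel _)
      change x.1⁻¹ * (α x.2⁻¹ x.2)⁻¹ * (α 1 1)⁻¹ * x.1 * α x.2⁻¹ x.2 = (α 1 1)⁻¹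
      calc _ = (x.1⁻¹ * x.1) * ((α x.2⁻¹ x.2)⁻¹ * α x.2⁻¹ x.2) * (α 1 1)⁻¹ := by ac_rfl
        _ = _ := by simp)
  let π : E →* G := { toFun := Ex.snd, map_one' := rfl, map_mul' := fun _ _ => rfl }
  let i : ℂˣ →* E :=
    { toFun := fun c => ⟨c * (α 1 1)⁻¹, 1⟩
      map_one' := by rw [hone, one_mul]
      map_mul' := by
        intro c d
        rw [hmul]
        refine Ex.ext ?_ (one_mul _).symm
        change c * d * (α 1 1)⁻¹ = c * (α 1 1)⁻¹ * (d * (α 1 1)⁻¹) * α 1 1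
        calc _ = c * d * (α 1 1)⁻¹ * ((α 1 1)⁻¹ * α 1 1) := by simp
          _ = _ := by ac_rfl }
  have hi : ∀ c, i c = ⟨c * (α 1 1)⁻¹, 1⟩ := fun _ => rfl
  have hil : ∀ c (x : E), i c * x = ⟨c * x.1, x.2⟩ := by
    intro c x
    rw [hmul, hi]
    refine Ex.ext ?_ (one_mul _)
    change c * (α 1 1)⁻¹ * x.1 * α 1 x.2 = _
    rw [hα.one_left x.2]
    calc _ = c * x.1 * ((α 1 1)⁻¹ * α 1 1) := by ac_rfl
      _ = _ := by simp
  refine ⟨E, inferInstance, π, i, fun g => ⟨1, g⟩, ?_, ?_, fun _ => rfl, fun _ => rfl, ?_, ?_⟩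
  · intro c d h
    exact mul_right_cancel (congrArg Ex.fst h)
  · intro c x
    rw [hil, hmul, hi]
    refine Ex.ext ?_ (mul_one _).symm
    change _ = x.1 * (c * (α 1 1)⁻¹) * α x.2 1
    rw [hα.one_right x.2]
    calc c * x.1 = x.1 * c * ((α 1 1)⁻¹ * α 1 1) := by simp [mul_comm]
      _ = _ := by ac_rfl
  · intro g h
    rw [hil, hmul]
    simp
  · intro x
    refine ⟨x.1, ?_⟩
    rw [hil]
    simp [π, E]

/-- The commutator pairing is multiplicative in the first variable. -/
lemma IsC.skew_mul_left {α : G → G → ℂˣ} (hα : IsC α) {x y z : G}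
    (h1 : α (z * x) y = α (x * z) y) (h2 : α x (z * y) = α x (y * z)) :
    α (x * y) z / α z (x * y) = (α x z / α z x) * (α y z / α z y) := by
  have a := hα x y z
  have b := hα z x y
  have c := hα x z y
  rw [h1] at b
  rw [h2] at c
  rw [div_mul_div_comm, div_eq_div_iff_mul_eq_mul]
  apply mul_right_cancel (b := α x y * α (x * z) y)
  calc α (x * y) z * (α z x * α z y) * (α x y * α (x * z) y)
      = (α (x * y) z * α x y) * (α (x * z) y * α z x) * α z y := by ac_rfl
    _ = α y z * (α z y * α x (y * z)) * (α x y * α z (x * y)) := by rw [a, b]; ac_rfl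
    _ = α x z * α y z * α z (x * y) * (α x y * α (x * z) y) := by rw [← c]; ac_rfl

/-- The Hall-Witt identity for the commutator pairing of a cocycle. -/
lemma IsC.hall_witt {α : G → G → ℂˣ} (hα : IsC α)
    (hcen : ∀ x y z : G, ⁅x, y⁆ * z = z * ⁅x, y⁆) (x y z : G) :
    (α z ⁅x, y⁆ / α ⁅x, y⁆ z) * (α y ⁅z⁻¹, x⁻¹⁆ / α ⁅z⁻¹, x⁻¹⁆ y) *
      (α x⁻¹ ⁅y⁻¹, z⁆ / α ⁅y⁻¹, z⁆ x⁻¹) = 1 := by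
  obtain ⟨E, _, π, i, e, hi, hc, hπi, hπe, hmul, hE⟩ := exists_ext hα
  have comm : ∀ a b : E, π a * π b = π b * π a →
      ⁅a, b⁆ = i (α (π a) (π b) / α (π b) (π a)) := by
    intro a b hab
    obtain ⟨c, hc'⟩ := hE a
    obtain ⟨d, hd'⟩ := hE b
    rw [commutatorElement_def, mul_assoc, ← mul_inv_rev, mul_inv_eq_iff_eq_mul]
    have h1 : a * b = i (c * d * α (π a) (π b)) * e (π a * π b) := by
      rw [map_mul, map_mul, mul_assoc (i c * i d), ← hmul, hc', hd']
      simp only [map_mul, hπi, hπe, one_mul]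
      rw [mul_assoc, mul_assoc, ← mul_assoc _ (i d), ← hc d, mul_assoc]
    have h2 : b * a = i (d * c * α (π b) (π a)) * e (π b * π a) := by
      rw [map_mul, map_mul, mul_assoc (i d * i c), ← hmul, hc', hd']
      simp only [map_mul, hπi, hπe, one_mul]
      rw [mul_assoc, mul_assoc, ← mul_assoc _ (i c), ← hc c, mul_assoc]
    rw [h1, h2, ← hab, ← mul_assoc, ← map_mul]
    congr 1
    rw [mul_comm d c, ← map_mul, mul_left_comm, div_mul_cancel]
  have key : ∀ a b c : E, ⁅a, ⁅b, c⁆⁆ =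
      i (α (π a) ⁅π b, π c⁆ / α ⁅π b, π c⁆ (π a)) := by
    intro a b c
    have := comm a ⁅b, c⁆ (by rw [map_commutatorElement, hcen])
    rwa [map_commutatorElement] at this
  have hw : ∀ a b c : E, ⁅c, ⁅a, b⁆⁆ =
      a * c * ⁅b, ⁅c⁻¹, a⁻¹⁆⁆⁻¹ * c⁻¹ * b * ⁅a⁻¹, ⁅b⁻¹, c⁆⁆⁻¹ * b⁻¹ * a⁻¹ := by
    intro a b c
    simp [commutatorElement_def, mul_assoc]
  have h := hw (e x) (e y) (e z)
  rw [key, key, key] at h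
  simp only [map_inv, hπe] at h
  rw [← map_inv, ← map_inv] at h
  generalize hA : α z ⁅x, y⁆ / α ⁅x, y⁆ z = A at *
  generalize hB : α y ⁅z⁻¹, x⁻¹⁆ / α ⁅z⁻¹, x⁻¹⁆ y = B at *
  generalize hC : α x⁻¹ ⁅y⁻¹, z⁆ / α ⁅y⁻¹, z⁆ x⁻¹ = C at *
  have h' : i A = i (B⁻¹ * C⁻¹) := by
    rw [h]
    rw [← hc B⁻¹ (e x * e z)]
    simp only [mul_assoc, map_mul]
    congr 1
    simp only [← mul_assoc]
    rw [← hc C⁻¹]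
    group
  have h2 := hi h'
  rw [h2]
  calc B⁻¹ * C⁻¹ * B * C = (B⁻¹ * B) * (C⁻¹ * C) := by ac_rfl
    _ = 1 := by simp

end Coh

section Class2

variable {G : Type} [Group G]

variable (G) in
/-- Cocycles whose commutator pairing with the derived subgroup is trivial. -/
def K2 : Subgroup (G → G → ℂˣ) where
  carrier := {α | IsC α ∧ ∀ g, ∀ w ∈ commutator G, α g w = α w g}
  one_mem' := ⟨(Z2 G).one_mem, fun _ _ _ => rfl⟩
  mul_mem' := fun {α β} h1 h2 => ⟨(Z2 G).mul_mem h1.1 h2.1, fun g w hw => by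
    simp [h1.2 g w hw, h2.2 g w hw]⟩
  inv_mem' := fun {α} h1 => ⟨(Z2 G).inv_mem h1.1, fun g w hw => by simp [h1.2 g w hw]⟩

variable (G) in
/-- Cocycles inflated from the abelianization. -/
def Inf2 : Subgroup (G → G → ℂˣ) where
  carrier := {α | IsC α ∧ ∀ g h, ∀ v ∈ commutator G, ∀ w ∈ commutator G,
    α (g * v) (h * w) = α g h}
  one_mem' := ⟨(Z2 G).one_mem, fun _ _ _ _ _ _ => rfl⟩
  mul_mem' := fun {α β} h1 h2 => ⟨(Z2 G).mul_mem h1.1 h2.1, fun g h v hv w hw => by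
    simp [h1.2 g h v hv w hw, h2.2 g h v hv w hw]⟩
  inv_mem' := fun {α} h1 => ⟨(Z2 G).inv_mem h1.1, fun g h v hv w hw => by
    simp [h1.2 g h v hv w hw]⟩

lemma comm_mem (x y : G) : ⁅x, y⁆ ∈ commutator G :=
  Subgroup.commutator_mem_commutator (Subgroup.mem_top x) (Subgroup.mem_top y)

lemma relIndex_K2 [Finite G] {p k : ℕ} (hp : p.Prime)
    (hcen : ∀ w ∈ commutator G, ∀ z, w * z = z * w)
    (hk : Nat.card (commutator G) = p ^ k) :
    (K2 G).relIndex (Z2 G) ≤ p ^ (k * (k + 3) / 2) := by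
  let _ : CommGroup (commutator G) :=
    { (inferInstance : Group (commutator G)) with
      mul_comm := fun a b => Subtype.ext (hcen a.1 a.2 b.1) }
  let B : G → G → commutator G := fun x y => ⟨⁅x, y⁆, comm_mem x y⟩
  have hl : ∀ (α : Z2 G) (x y z : G), z * x = x * z → z * y = y * z →
      α.1 (x * y) z / α.1 z (x * y) = (α.1 x z / α.1 z x) * (α.1 y z / α.1 z y) := by
    intro α x y z h1 h2
    exact IsC.skew_mul_left α.2 (by rw [h1]) (by rw [h2])
  let Φ : Z2 G →* (G →* (commutator G →* ℂˣ)) := MonoidHom.mk'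
    (fun α => MonoidHom.mk' (fun g => MonoidHom.mk' (fun w => α.1 g w.1 / α.1 w.1 g) (by
        intro v w
        have := congrArg (·⁻¹) (hl α v.1 w.1 g (hcen _ v.2 g).symm (hcen _ w.2 g).symm)
        simp only [mul_inv, inv_div] at this
        exact this)) (by
      intro g h
      ext w
      exact congrArg Units.val (hl α g h w.1 (hcen _ w.2 g) (hcen _ w.2 h)))) (by
    intro α β
    ext g w
    refine congrArg Units.val ?_
    change (α.1 g w.1 * β.1 g w.1) / (α.1 w.1 g * β.1 w.1 g) =
      (α.1 g w.1 / α.1 w.1 g) * (β.1 g w.1 / β.1 w.1 g)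
    rw [div_mul_div_comm])
  have hΦ : ∀ (α : Z2 G) g w, Φ α g w = α.1 g w.1 / α.1 w.1 g := fun _ _ _ => rfl
  have hker : Φ.ker = (K2 G).subgroupOf (Z2 G) := by
    ext α
    rw [MonoidHom.mem_ker, Subgroup.mem_subgroupOf]
    constructor
    · intro h
      refine ⟨α.2, fun g w hw => ?_⟩
      have : Φ α g ⟨w, hw⟩ = 1 := by rw [h]; rfl
      rw [hΦ] at this
      exact div_eq_one.1 this
    · intro h
      ext g w
      refine congrArg Units.val ?_
      rw [hΦ, h.2 g w.1 w.2, div_self']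
      rfl
  rw [Subgroup.relIndex, ← hker, Subgroup.index_ker]
  have hBinv : ∀ x y, B x y = (B y x)⁻¹ := fun x y =>
    Subtype.ext (commutatorElement_inv y x).symm
  have hgc : ∀ x y : G, ⁅x⁻¹, y⁆ = ⁅x, y⁆⁻¹ := by
    intro x y
    have h := hcen _ (comm_mem x y) x
    rw [eq_inv_iff_mul_eq_one]
    have : ⁅x, y⁆ = x⁻¹ * ⁅x, y⁆ * x := by rw [mul_assoc, h, inv_mul_cancel_left]
    rw [this]
    simp [commutatorElement_def, mul_assoc]
  have hB1 : ∀ x y, B x⁻¹ y = (B x y)⁻¹ := fun x y => Subtype.ext (hgc x y)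
  have hB2 : ∀ x y, B x y⁻¹ = (B x y)⁻¹ := fun x y => by
    rw [hBinv, hB1, ← hBinv]
  refine le_trans (Subgroup.card_le_of_le ?_) (card_jacobi (p := p) (k := k) hp B hBinv ?_ hk)
  · rintro _ ⟨α, rfl⟩ x y z
    have h : Φ α z (B x y) * Φ α y (B z⁻¹ x⁻¹) * Φ α x⁻¹ (B y⁻¹ z) = 1 :=
      IsC.hall_witt α.2 (fun a b c => hcen _ (comm_mem a b) c) x y z
    rw [hB1, hB2, hB1, inv_inv, map_inv, map_inv, MonoidHom.inv_apply, inv_inv] at h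
    rw [← h]
    ac_rfl
  · rw [eq_top_iff]
    rintro ⟨w, hw⟩ -
    have hw' := hw
    rw [commutator_eq_closure] at hw'
    induction hw' using Subgroup.closure_induction with
    | mem x hx =>
      obtain ⟨a, b, rfl⟩ := hx
      exact Subgroup.subset_closure ⟨(a, b), rfl⟩
    | one => exact Subgroup.one_mem _
    | mul x y hx hy h1 h2 =>
      rw [← commutator_eq_closure] at hx hy
      exact Subgroup.mul_mem _ (h1 hx) (h2 hy)
    | inv x hx h1 =>
      rw [← commutator_eq_closure] at hx
      exact Subgroup.inv_mem _ (h1 hx)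

/-- A set-theoretic section of the abelianization map, as a function on `G`. -/
lemma exists_section : ∃ σ : G → G, (∀ g, g * (σ g)⁻¹ ∈ commutator G) ∧
    (∀ g h, g * h⁻¹ ∈ commutator G → σ g = σ h) := by
  refine ⟨fun g => Quotient.out (g : G ⧸ commutator G), ?_, ?_⟩
  · intro g
    rw [← QuotientGroup.eq_one_iff, QuotientGroup.mk_mul, QuotientGroup.mk_inv]
    beta_reduce
    rw [QuotientGroup.out_eq', mul_inv_cancel]
  · intro g h hgh
    rw [← QuotientGroup.eq_one_iff, QuotientGroup.mk_mul, QuotientGroup.mk_inv,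
      mul_inv_eq_one] at hgh
    beta_reduce
    rw [hgh]

lemma B2_le_K2 (hcen : ∀ w ∈ commutator G, ∀ z, w * z = z * w) : B2 G ≤ K2 G := by
  intro α h
  refine ⟨B2_le_Z2 h, fun g w hw => ?_⟩
  obtain ⟨f, hf⟩ := h
  rw [hf, hf, hcen w hw, mul_comm (f g)]

lemma Inf2_le_K2 : Inf2 G ≤ K2 G := by
  rintro α ⟨hα, h⟩
  refine ⟨hα, fun g w hw => ?_⟩
  have h1 := h g 1 1 (one_mem _) w hw
  have h2 := h 1 g w hw 1 (one_mem _)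
  rw [one_mul, mul_one] at h1 h2
  rw [h1, h2, hα.one_left, hα.one_right]

lemma K2_le (hcen : ∀ w ∈ commutator G, ∀ z, w * z = z * w) : K2 G ≤ B2 G ⊔ Inf2 G := by
  rintro α ⟨hα, hK⟩
  obtain ⟨σ, hσ1, hσ2⟩ := exists_section (G := G)
  obtain ⟨E, _, π, i, e, hi, hc, hπi, hπe, hmul, hE⟩ := exists_ext hα
  let T : Subgroup E := (commutator G).comap π
  have hT : ∀ t ∈ T, ∀ x, t * x = x * t := by
    intro t ht x
    obtain ⟨c, hc'⟩ := hE t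
    obtain ⟨d, hd'⟩ := hE x
    have ht' : π t ∈ commutator G := ht
    have h1 : e (π t) * e (π x) = e (π x) * e (π t) := by
      rw [hmul, hmul, hK _ _ ht', hcen _ ht']
    rw [hc', hd']
    calc i c * e (π t) * (i d * e (π x)) = i c * (e (π t) * i d) * e (π x) := by group
      _ = i c * i d * (e (π t) * e (π x)) := by rw [← hc]; group
      _ = i d * i c * (e (π x) * e (π t)) := by rw [h1, hc c]
      _ = i d * (i c * e (π x)) * e (π t) := by group
      _ = _ := by rw [hc c]; group
  let _ : CommGroup T :=
    { (inferInstance : Group T) with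
      mul_comm := fun a b => Subtype.ext (hT a.1 a.2 b.1) }
  let i' : ℂˣ →* T := i.codRestrict T (fun c => by
    rw [Subgroup.mem_comap, hπi]; exact one_mem _)
  have hi'c : ∀ c, (i' c : E) = i c := fun _ => rfl
  obtain ⟨r, hr⟩ := exists_retraction i' (fun a b h => hi (congrArg Subtype.val h))
  have hm1 : ∀ g, e g * (e (σ g))⁻¹ ∈ T := fun g => by
    rw [Subgroup.mem_comap, map_mul, map_inv, hπe, hπe]
    exact hσ1 g
  have hσσ : ∀ g h, σ g * σ h * (σ (g * h))⁻¹ ∈ commutator G := by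
    intro g h
    have h1 := hσ1 g
    have h2 := hσ1 h
    have h3 := hσ1 (g * h)
    rw [← QuotientGroup.eq_one_iff, QuotientGroup.mk_mul, QuotientGroup.mk_inv,
      mul_inv_eq_one] at h1 h2 h3
    rw [← QuotientGroup.eq_one_iff, QuotientGroup.mk_mul, QuotientGroup.mk_mul,
      QuotientGroup.mk_inv, ← h1, ← h2, ← h3, mul_inv_eq_one]
    rfl
  have hm2 : ∀ g h, e (σ g) * e (σ h) * (e (σ (g * h)))⁻¹ ∈ T := fun g h => by
    rw [Subgroup.mem_comap, map_mul, map_mul, map_inv, hπe, hπe, hπe]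
    exact hσσ g h
  let f : G → ℂˣ := fun g => r ⟨_, hm1 g⟩
  let β : G → G → ℂˣ := fun g h => r ⟨_, hm2 g h⟩
  have key : ∀ g h, α g h = (f g * f h / f (g * h)) * β g h := by
    intro g h
    rw [div_mul_eq_mul_div, eq_div_iff_mul_eq', ← hr (α g h)]
    change r _ * r _ = r _ * r _ * r _
    rw [← map_mul, ← map_mul, ← map_mul]
    refine congrArg r (Subtype.ext ?_)
    change i (α g h) * (e (g * h) * (e (σ (g * h)))⁻¹) =
      e g * (e (σ g))⁻¹ * (e h * (e (σ h))⁻¹) * (e (σ g) * e (σ h) * (e (σ (g * h)))⁻¹)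
    have e1 := hT _ (hm1 h) (e (σ g))
    calc _ = i (α g h) * e (g * h) * (e (σ (g * h)))⁻¹ := by group
      _ = e g * e h * (e (σ (g * h)))⁻¹ := by rw [hmul]
      _ = e g * (e (σ g))⁻¹ * (e (σ g) * (e h * (e (σ h))⁻¹)) * e (σ h)
            * (e (σ (g * h)))⁻¹ := by group
      _ = _ := by rw [← e1]; group
  have hB : (fun g h => f g * f h / f (g * h)) ∈ B2 G := ⟨f, fun _ _ => rfl⟩
  have hβ : β = (fun g h => f g * f h / f (g * h))⁻¹ * α := by
    funext g h
    simp only [Pi.mul_apply, Pi.inv_apply]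
    rw [key g h, inv_mul_cancel_left]
  have hα' : α = (fun g h => f g * f h / f (g * h)) * β := by
    rw [hβ, mul_inv_cancel_left]
  rw [hα']
  refine Subgroup.mul_mem_sup hB ⟨?_, ?_⟩
  · rw [hβ]
    exact (Z2 G).mul_mem ((Z2 G).inv_mem (B2_le_Z2 hB)) hα
  · intro g h v hv w hw
    have s1 : σ (g * v) = σ g := hσ2 _ _ (by rw [← hcen v hv, mul_inv_cancel_right]; exact hv)
    have s2 : σ (h * w) = σ h := hσ2 _ _ (by rw [← hcen w hw, mul_inv_cancel_right]; exact hw)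
    have s3 : σ (g * v * (h * w)) = σ (g * h) := hσ2 _ _ (by
      have : g * v * (h * w) * (g * h)⁻¹ = v * w := by
        rw [← hcen v hv g, ← hcen w hw h, mul_assoc v, ← mul_assoc g, ← hcen w hw g]
        group
      rw [this]
      exact mul_mem hv hw)
    change r _ = r _
    refine congrArg r (Subtype.ext ?_)
    change e (σ (g * v)) * e (σ (h * w)) * (e (σ (g * v * (h * w))))⁻¹ = _
    rw [s1, s2, s3]

end Class2
section Alt

variable {G : Type} [Group G]

variable (G) in
/-- Antisymmetrization of functions of two variables. -/
def skew : (G → G → ℂˣ) →* (G → G → ℂˣ) where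
  toFun α := fun g h => α g h / α h g
  map_one' := by funext g h; simp
  map_mul' := by
    intro α β
    funext g h
    simp only [Pi.mul_apply]
    rw [div_mul_div_comm]

lemma skew_apply (α : G → G → ℂˣ) (g h : G) : skew G α g h = α g h / α h g := rfl

lemma Inf2_congr {α : G → G → ℂˣ} (hα : α ∈ Inf2 G) {g g' h h' : G}
    (h1 : Abelianization.of g = Abelianization.of g')
    (h2 : Abelianization.of h = Abelianization.of h') : α g h = α g' h' := by
  have a : g'⁻¹ * g ∈ commutator G := QuotientGroup.eq.1 h1.symm
  have b : h'⁻¹ * h ∈ commutator G := QuotientGroup.eq.1 h2.symm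
  have := hα.2 g' h' _ a _ b
  rwa [mul_inv_cancel_left, mul_inv_cancel_left] at this

lemma skew_ker {α : G → G → ℂˣ} (hα : α ∈ Inf2 G) (hs : skew G α = 1) : α ∈ B2 G := by
  have hsym : ∀ g h, α g h = α h g := by
    intro g h
    have := congrFun (congrFun hs g) h
    rw [skew_apply] at this
    exact div_eq_one.1 this
  have hsur : Function.Surjective (Abelianization.of : G →* Abelianization G) :=
    QuotientGroup.mk_surjective
  choose τ hτ using hsur
  let αV : Abelianization G → Abelianization G → ℂˣ := fun u v => α (τ u) (τ v)
  have hV : ∀ g h, αV (Abelianization.of g) (Abelianization.of h) = α g h := fun g h =>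
    Inf2_congr hα (hτ _) (hτ _)
  have hC : IsC αV := by
    intro u v w
    rw [← hτ u, ← hτ v, ← hτ w, ← map_mul, ← map_mul, hV, hV, hV, hV]
    exact hα.1 _ _ _
  obtain ⟨E, _, π, i, e, hi, hc, hπi, hπe, hmul, hE⟩ := exists_ext hC
  let _ : CommGroup E :=
    { (inferInstance : Group E) with
      mul_comm := by
        intro a b
        obtain ⟨c, hc'⟩ := hE a
        obtain ⟨d, hd'⟩ := hE b
        have h1 : e (π a) * e (π b) = e (π b) * e (π a) := by
          rw [hmul, hmul, mul_comm (π a)]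
          exact congrArg (fun t => i t * _) (hsym _ _)
        rw [hc', hd']
        calc i c * e (π a) * (i d * e (π b)) = i c * (e (π a) * i d) * e (π b) := by group
          _ = i c * i d * (e (π a) * e (π b)) := by rw [← hc]; group
          _ = i d * i c * (e (π b) * e (π a)) := by rw [h1, hc c]
          _ = i d * (i c * e (π b)) * e (π a) := by group
          _ = _ := by rw [hc c]; group }
  obtain ⟨r, hr⟩ := exists_retraction i hi
  refine ⟨fun g => r (e (Abelianization.of g)), fun g h => ?_⟩
  rw [← map_mul, hmul, map_mul, hr, hV, ← map_mul, mul_div_cancel_right]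

lemma skew_mul {α : G → G → ℂˣ} (hα : α ∈ Inf2 G) (x y z : G) :
    skew G α (x * y) z = skew G α x z * skew G α y z :=
  IsC.skew_mul_left hα.1 (Inf2_congr hα (by simp [mul_comm]) rfl)
    (Inf2_congr hα rfl (by simp [mul_comm]))

lemma skew_swap (α : G → G → ℂˣ) (x y : G) : skew G α x y = (skew G α y x)⁻¹ := by
  rw [skew_apply, skew_apply, inv_div]

lemma skew_pow {α : G → G → ℂˣ} (hα : α ∈ Inf2 G) {p : ℕ}
    (hGp : ∀ x : G, x ^ p ∈ commutator G) (x y : G) : skew G α x y ^ p = 1 := by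
  let c : G →* ℂˣ := MonoidHom.mk' (fun x => skew G α x y) (fun a b => skew_mul hα a b y)
  have h1 : skew G α x y ^ p = c (x ^ p) := (map_pow c x p).symm
  rw [h1, ← map_one c]
  have h2 : Abelianization.of (x ^ p) = Abelianization.of (1 : G) := by
    rw [map_one]
    exact (QuotientGroup.eq_one_iff _).2 (hGp x)
  change α _ _ / α _ _ = α _ _ / α _ _
  rw [Inf2_congr hα h2 rfl, Inf2_congr hα rfl h2]

lemma card_skew [Finite G] {p d : ℕ} (hp : p.Prime)
    (hGp : ∀ x : G, x ^ p ∈ commutator G) (hd : Group.rank G = d) :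
    Nat.card ((Inf2 G).map (skew G)) ≤ p ^ (d * (d - 1) / 2) ∧
      Finite ((Inf2 G).map (skew G)) := by
  haveI : NeZero p := ⟨hp.ne_zero⟩
  obtain ⟨S, hS, hcl⟩ := Group.rank_spec G
  rw [hd] at hS
  let ε : Fin d ≃ S := (S.equivFinOfCardEq hS).symm
  let F : ((Inf2 G).map (skew G)) → ((i : Fin d) × Fin i.1) → rootsOfUnity p ℂ :=
    fun c q => ⟨c.1 (ε q.1) (ε ⟨q.2.1, q.2.2.trans q.1.2⟩), by
      obtain ⟨_, α, hα, rfl⟩ := c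
      rw [mem_rootsOfUnity]
      exact skew_pow hα hGp _ _⟩
  have hF : Function.Injective F := by
    rintro ⟨_, α, hα, rfl⟩ ⟨_, β, hβ, rfl⟩ h
    apply Subtype.ext
    change skew G α = skew G β
    have h1 : ∀ a b : Fin d, b < a → skew G α (ε a) (ε b) = skew G β (ε a) (ε b) := by
      intro a b hab
      exact congrArg Subtype.val (congrFun h ⟨a, ⟨b.1, hab⟩⟩)
    have h2 : ∀ a b : Fin d, skew G α (ε a) (ε b) = skew G β (ε a) (ε b) := by
      intro a b
      rcases lt_trichotomy a b with hab | hab | hab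
      · rw [skew_swap α, skew_swap β, h1 b a hab]
      · subst hab
        simp [skew_apply]
      · exact h1 a b hab
    have h3 : ∀ x ∈ S, ∀ y ∈ S, skew G α x y = skew G β x y := by
      intro x hx y hy
      have := h2 (ε.symm ⟨x, hx⟩) (ε.symm ⟨y, hy⟩)
      simpa using this
    have ext1 : ∀ y, (∀ x ∈ S, skew G α x y = skew G β x y) →
        ∀ x, skew G α x y = skew G β x y := by
      intro y hy x
      let cα : G →* ℂˣ := MonoidHom.mk' (fun x => skew G α x y) (fun a b => skew_mul hα a b y)
      let cβ : G →* ℂˣ := MonoidHom.mk' (fun x => skew G β x y) (fun a b => skew_mul hβ a b y)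
      have : cα = cβ := MonoidHom.eq_of_eqOn_dense hcl (fun x hx => hy x hx)
      exact DFunLike.congr_fun this x
    funext x y
    apply ext1
    intro x hx
    rw [skew_swap α, skew_swap β]
    congr 1
    apply ext1
    intro z hz
    exact h3 z hz x hx
  refine ⟨(Nat.card_le_card_of_injective F hF).trans (le_of_eq ?_), Finite.of_injective F hF⟩
  rw [Nat.card_fun, Complex.card_rootsOfUnity]
  congr 1
  rw [Nat.card_sigma]
  simp only [Nat.card_eq_fintype_card, Fintype.card_fin]
  rw [Fin.sum_univ_eq_sum_range (fun i => i) d, Finset.sum_range_id]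

lemma card_skew_B2 [Finite G] (hcen : ∀ w ∈ commutator G, ∀ z, w * z = z * w)
    (hfin : Finite ((Inf2 G).map (skew G))) :
    Nat.card (commutator G) ≤ Nat.card ((B2 G ⊓ Inf2 G).map (skew G)) := by
  let _ : CommGroup (commutator G) :=
    { (inferInstance : Group (commutator G)) with
      mul_comm := fun a b => Subtype.ext (hcen a.1 a.2 b.1) }
  obtain ⟨σ, hσ1, hσ2⟩ := exists_section (G := G)
  haveI : Finite ((B2 G ⊓ Inf2 G).map (skew G)) :=
    Finite.of_injective _ (Subgroup.inclusion_injective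
      (Subgroup.map_mono (f := skew G) (inf_le_right : B2 G ⊓ Inf2 G ≤ Inf2 G)))
  have hσσ : ∀ g h, σ g * σ h * (σ (g * h))⁻¹ ∈ commutator G := by
    intro g h
    have h1 := hσ1 g
    have h2 := hσ1 h
    have h3 := hσ1 (g * h)
    rw [← QuotientGroup.eq_one_iff, QuotientGroup.mk_mul, QuotientGroup.mk_inv,
      mul_inv_eq_one] at h1 h2 h3
    rw [← QuotientGroup.eq_one_iff, QuotientGroup.mk_mul, QuotientGroup.mk_mul,
      QuotientGroup.mk_inv, ← h1, ← h2, ← h3, mul_inv_eq_one]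
    rfl
  have hcomm : ∀ g h, σ g * σ h * (σ (g * h))⁻¹ = ⁅g, h⁆ * (σ h * σ g * (σ (h * g))⁻¹) := by
    intro g h
    have e1 : σ (g * h) = σ (h * g) := hσ2 _ _ (by
      rw [mul_inv_rev, ← mul_assoc]
      exact comm_mem g h)
    rw [e1, ← mul_assoc, ← mul_assoc]
    congr 1
    obtain ⟨v, hv, hgv⟩ : ∃ v ∈ commutator G, g = v * σ g := ⟨_, hσ1 g, by group⟩
    obtain ⟨w, hw, hhw⟩ : ∃ w ∈ commutator G, h = w * σ h := ⟨_, hσ1 h, by group⟩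
    have e2 : ⁅g, h⁆ = ⁅σ g, σ h⁆ := by
      rw [commutatorElement_def, commutatorElement_def]
      rw [mul_assoc, ← mul_inv_rev, mul_assoc (σ g * σ h), ← mul_inv_rev]
      have e3 : g * h = v * w * (σ g * σ h) := by
        conv_lhs => rw [hgv, hhw]
        rw [mul_assoc, ← mul_assoc (σ g), ← hcen w hw]; group
      have e4 : h * g = v * w * (σ h * σ g) := by
        conv_lhs => rw [hgv, hhw]
        rw [mul_assoc, ← mul_assoc (σ h), ← hcen v hv, hcen v hv w]; group
      rw [e3, e4, hcen _ (mul_mem hv hw) (σ g * σ h), hcen _ (mul_mem hv hw) (σ h * σ g)]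
      group
    rw [e2]
    simp [commutatorElement_def, mul_assoc]
  let β : (commutator G →* ℂˣ) → G → G → ℂˣ := fun χ g h => χ ⟨_, hσσ g h⟩
  have hβ : ∀ χ, β χ ∈ B2 G ⊓ Inf2 G := by
    intro χ
    have hB : β χ ∈ B2 G := by
      refine ⟨fun g => (χ ⟨_, hσ1 g⟩)⁻¹, fun g h => ?_⟩
      beta_reduce
      rw [div_inv_eq_mul, ← map_inv, ← map_inv, ← map_mul, ← map_mul]
      refine congrArg χ (Subtype.ext ?_)
      change σ g * σ h * (σ (g * h))⁻¹ =
        (g * (σ g)⁻¹)⁻¹ * (h * (σ h)⁻¹)⁻¹ * (g * h * (σ (g * h))⁻¹)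
      have := hcen _ (inv_mem (hσ1 h)) g
      symm
      calc (g * (σ g)⁻¹)⁻¹ * (h * (σ h)⁻¹)⁻¹ * (g * h * (σ (g * h))⁻¹)
          = (g * (σ g)⁻¹)⁻¹ * ((h * (σ h)⁻¹)⁻¹ * g) * h * (σ (g * h))⁻¹ := by group
        _ = σ g * σ h * (σ (g * h))⁻¹ := by rw [this]; group
    refine ⟨hB, B2_le_Z2 hB, ?_⟩
    intro g h v hv w hw
    have s1 : σ (g * v) = σ g := hσ2 _ _ (by rw [← hcen v hv, mul_inv_cancel_right]; exact hv)
    have s2 : σ (h * w) = σ h := hσ2 _ _ (by rw [← hcen w hw, mul_inv_cancel_right]; exact hw)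
    have s3 : σ (g * v * (h * w)) = σ (g * h) := hσ2 _ _ (by
      have : g * v * (h * w) * (g * h)⁻¹ = v * w := by
        rw [← hcen v hv g, ← hcen w hw h, mul_assoc v, ← mul_assoc g, ← hcen w hw g]
        group
      rw [this]
      exact mul_mem hv hw)
    refine congrArg χ (Subtype.ext ?_)
    change σ (g * v) * σ (h * w) * (σ (g * v * (h * w)))⁻¹ = _
    rw [s1, s2, s3]
  have hsk : ∀ χ g h, skew G (β χ) g h = χ ⟨⁅g, h⁆, comm_mem g h⟩ := by
    intro χ g h
    rw [skew_apply, div_eq_iff_eq_mul, ← map_mul]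
    exact congrArg χ (Subtype.ext (hcomm g h))
  rw [← CommGroup.card_monoidHom_of_hasEnoughRootsOfUnity (commutator G) ℂ]
  refine Nat.card_le_card_of_injective
    (fun χ => (⟨skew G (β χ), Subgroup.mem_map_of_mem _ (hβ χ)⟩ :
      (B2 G ⊓ Inf2 G).map (skew G))) ?_
  intro χ ψ h
  have h' : ∀ a b, χ ⟨⁅a, b⁆, comm_mem a b⟩ = ψ ⟨⁅a, b⁆, comm_mem a b⟩ := by
    intro a b
    rw [← hsk, ← hsk]
    exact congrFun (congrFun (congrArg Subtype.val h) a) b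
  have hall : ∀ w (hw : w ∈ commutator G), χ ⟨w, hw⟩ = ψ ⟨w, hw⟩ := by
    intro w hw
    have hw' := hw
    rw [commutator_eq_closure] at hw'
    induction hw' using Subgroup.closure_induction with
    | mem x hx =>
      obtain ⟨a, b, rfl⟩ := hx
      exact h' a b
    | one => exact (map_one χ).trans (map_one ψ).symm
    | mul x y hx hy h1 h2 =>
      rw [← commutator_eq_closure] at hx hy
      have := congrArg₂ (· * ·) (h1 hx) (h2 hy)
      simp only [← map_mul] at this
      exact this
    | inv x hx h1 =>
      rw [← commutator_eq_closure] at hx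
      have := congrArg (·⁻¹) (h1 hx)
      simp only [← map_inv] at this
      exact this
  ext w
  exact congrArg Units.val (hall w.1 w.2)

lemma main_nat [Finite G] {p k d : ℕ} (hp : p.Prime)
    (hcen : ∀ w ∈ commutator G, ∀ z, w * z = z * w)
    (hGp : ∀ x : G, x ^ p ∈ commutator G) (hd : Group.rank G = d)
    (hk : Nat.card (commutator G) = p ^ k) :
    Nat.card (schurMultiplier G) * p ^ k ≤ p ^ (d * (d - 1) / 2) * p ^ (k * (k + 3) / 2) := by
  obtain ⟨h1, hfin⟩ := card_skew hp hGp hd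
  have h2 := card_skew_B2 hcen hfin
  have h3 := relIndex_K2 hp hcen hk
  have hKeq : K2 G = B2 G ⊔ Inf2 G :=
    le_antisymm (K2_le hcen) (sup_le (B2_le_K2 hcen) Inf2_le_K2)
  have h4 : (B2 G).relIndex (K2 G) = (B2 G).relIndex (Inf2 G) := by
    rw [hKeq, Subgroup.relIndex_sup_left]
  have hKZ : K2 G ≤ Z2 G := fun α h => h.1
  have h5 := Subgroup.relIndex_mul_relIndex _ _ _ (B2_le_K2 hcen) hKZ
  rw [card_schur, ← h5, h4]
  have hkl : (skew G).ker ⊓ Inf2 G ≤ B2 G := fun α h => skew_ker h.2 h.1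
  have h6 : ((skew G).ker ⊓ Inf2 G).relIndex (B2 G ⊓ Inf2 G) * (B2 G ⊓ Inf2 G).relIndex (Inf2 G)
      = ((skew G).ker ⊓ Inf2 G).relIndex (Inf2 G) :=
    Subgroup.relIndex_mul_relIndex _ _ _ (le_inf hkl inf_le_right) inf_le_right
  have h7 : ((skew G).ker ⊓ Inf2 G).relIndex (B2 G ⊓ Inf2 G) =
      Nat.card ((B2 G ⊓ Inf2 G).map (skew G)) := by
    rw [← Subgroup.relIndex_ker, ← Subgroup.inf_relIndex_right (skew G).ker,
      ← Subgroup.inf_relIndex_right ((skew G).ker ⊓ Inf2 G)]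
    congr 1
    ext α
    simp only [Subgroup.mem_inf]
    tauto
  rw [Subgroup.inf_relIndex_right, Subgroup.inf_relIndex_right, Subgroup.relIndex_ker, h7] at h6
  rw [hk] at h2
  calc (B2 G).relIndex (Inf2 G) * (K2 G).relIndex (Z2 G) * p ^ k
      = (p ^ k * (B2 G).relIndex (Inf2 G)) * (K2 G).relIndex (Z2 G) := by ring
    _ ≤ p ^ (d * (d - 1) / 2) * p ^ (k * (k + 3) / 2) :=
      Nat.mul_le_mul (((Nat.mul_le_mul_right _ h2).trans h6.le).trans h1) h3

end Alt

end SchurBound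

/-- Corollary 2, upper bound in the case `d ≥ k + 1`:
`|M(G)| ≤ p ^ (d * (d - 1) / 2 + k * (k + 1) / 2)`. -/
theorem schur_multiplier_upper_bound_class_two_d_ge (p k d : ℕ) (hp : p.Prime)
    (G : Type) [Group G] [Finite G] [Group.IsNilpotent G]
    (hpG : IsPGroup p G)
    (hc : Group.nilpotencyClass G = 2)
    (hGp : Subgroup.closure (Set.range fun x : G => x ^ p) ≤ commutator G)
    (hk : Nat.card (commutator G) = p ^ k)
    (hd : Group.rank G = d)
    (hkd : k + 1 ≤ d) :
    (Nat.card (schurMultiplier G) : ℝ) ≤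
      (p : ℝ) ^ ((d : ℝ) * ((d : ℝ) - 1) / 2 + (k : ℝ) * ((k : ℝ) + 1) / 2) := by
  have hcen : ∀ w ∈ commutator G, ∀ z, w * z = z * w := by
    intro w hw z
    have h := lowerCentralSeries_eq_bot_iff_nilpotencyClass_le.2 hc.le
    have h2 : ⁅w, z⁆ ∈ (⊤ : Subgroup G).lowerCentralSeries 2 := by
      refine Subgroup.commutator_mem_commutator ?_ (Subgroup.mem_top z)
      rw [Subgroup.top_lowerCentralSeries_one]
      exact hw
    rw [h, Subgroup.mem_bot] at h2
    exact commutatorElement_eq_one_iff_mul_comm.1 h2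
  have hGp' : ∀ x : G, x ^ p ∈ commutator G := fun x =>
    hGp (Subgroup.subset_closure ⟨x, rfl⟩)
  have key := SchurBound.main_nat hp hcen hGp' hd hk
  have hp0 : (0 : ℝ) < p := by exact_mod_cast hp.pos
  have hsum : d * (d - 1) / 2 + k * (k + 3) / 2 = (d * (d - 1) / 2 + k * (k + 1) / 2) + k := by
    have : k * (k + 3) = k * (k + 1) + k * 2 := by ring
    rw [this, Nat.add_mul_div_right _ _ two_pos, add_assoc]
  rw [← pow_add, hsum, pow_add] at key
  have key2 := Nat.le_of_mul_le_mul_right key (pow_pos hp.pos k)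
  have hexp : (d : ℝ) * ((d : ℝ) - 1) / 2 + (k : ℝ) * ((k : ℝ) + 1) / 2 =
      ((d * (d - 1) / 2 + k * (k + 1) / 2 : ℕ) : ℝ) := by
    have a1 : 2 ∣ d * (d - 1) := (Nat.even_mul_pred_self d).two_dvd
    have a2 : 2 ∣ k * (k + 1) := (Nat.even_mul_succ_self k).two_dvd
    rw [Nat.cast_add, Nat.cast_div a1 two_ne_zero, Nat.cast_div a2 two_ne_zero]
    push_cast [Nat.cast_sub (show 1 ≤ d by omega)]
    ring
  rw [hexp, Real.rpow_natCast]
  exact_mod_cast key2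
end

section
/- Let p be an odd prime and G a finite p-group of nilpotency class 2 with G^p = γ₂(G), |γ₂(G)| = p^k and d(G) = d. Then |M(G)| ≤ p^{(1/2)d(d-1) + (1/2)k(k-3)}. -/
namespace SchurAux

open scoped commutatorElement

variable {G A : Type} [Group G] [AddCommGroup A]

/-- Two-cocycle condition for trivial action. -/
def IsCoc (c : G → G → A) : Prop :=
  ∀ g h j, c (g * h) j + c g h = c h j + c g (h * j)

/-- The central extension attached to a cocycle. -/
@[ext] structure CE (c : {c : G → G → A // IsCoc c}) where
  a : A
  g : G

lemma coc_one_left {c : G → G → A} (hc : IsCoc c) (g : G) : c 1 g = c 1 1 := by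
  have := hc 1 1 g
  simp only [one_mul] at this
  have h2 := add_left_cancel this
  exact h2.symm

lemma coc_one_right {c : G → G → A} (hc : IsCoc c) (g : G) : c g 1 = c 1 1 := by
  have := hc g 1 1
  simp only [mul_one] at this
  exact add_right_cancel this

variable (c : {c : G → G → A // IsCoc c})

instance : Mul (CE c) := ⟨fun x y => ⟨x.a + y.a + c.1 x.g y.g, x.g * y.g⟩⟩
instance : One (CE c) := ⟨⟨- c.1 1 1, 1⟩⟩
instance : Inv (CE c) := ⟨fun x => ⟨- x.a - c.1 x.g⁻¹ x.g - c.1 1 1, x.g⁻¹⟩⟩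

@[simp] lemma mul_a (x y : CE c) : (x * y).a = x.a + y.a + c.1 x.g y.g := rfl
@[simp] lemma mul_g (x y : CE c) : (x * y).g = x.g * y.g := rfl
@[simp] lemma one_a : (1 : CE c).a = - c.1 1 1 := rfl
@[simp] lemma one_g : (1 : CE c).g = 1 := rfl
@[simp] lemma inv_a (x : CE c) : (x⁻¹).a = - x.a - c.1 x.g⁻¹ x.g - c.1 1 1 := rfl
@[simp] lemma inv_g (x : CE c) : (x⁻¹).g = x.g⁻¹ := rfl

instance : Group (CE c) :=
  Group.ofLeftAxioms
    (by
      intro x y z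
      ext
      · have := c.2 x.g y.g z.g
        simp only [mul_a, mul_g]
        have e : c.1 (x.g * y.g) z.g = c.1 y.g z.g + c.1 x.g (y.g * z.g) - c.1 x.g y.g :=
          eq_sub_of_add_eq this
        rw [e]; abel
      · simp [mul_assoc])
    (by
      intro x
      ext
      · simp [coc_one_left c.2 x.g]
      · simp)
    (by
      intro x
      ext
      · simp only [mul_a, inv_a, inv_g, one_a]; abel
      · simp)

/-- Projection to `G`. -/
def proj : CE c →* G where
  toFun := CE.g
  map_one' := rfl
  map_mul' _ _ := rfl

@[simp] lemma proj_apply (x : CE c) : proj c x = x.g := rfl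

/-- standard lift -/
def lft (g : G) : CE c := ⟨0, g⟩

lemma central_of {w : G} (hw : ∀ g, w * g = g * w) (hcw : ∀ g, c.1 w g = c.1 g w) (a : A)
    (x : CE c) : (⟨a, w⟩ : CE c) * x = x * ⟨a, w⟩ := by
  ext
  · simp [hcw, add_comm]
  · simp [hw]

lemma central_a (a : A) (x : CE c) : (⟨a, 1⟩ : CE c) * x = x * ⟨a, 1⟩ :=
  central_of c (by simp) (fun g => by
    rw [coc_one_left c.2 g, coc_one_right c.2 g]) a x

lemma comm_lft (g h : G) :
    ⁅lft c g, lft c h⁆ = ⟨c.1 g h - c.1 h g - c.1 ⁅g, h⁆ (h * g), ⁅g, h⁆⟩ := by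
  apply mul_right_cancel (b := lft c h * lft c g)
  have : ⁅lft c g, lft c h⁆ * (lft c h * lft c g) = lft c g * lft c h := by
    rw [commutatorElement_def]; group
  rw [this]
  ext
  · simp [lft]; abel
  · simp [lft, commutatorElement_def]

lemma commEl_central_left {E : Type} [Group E] (z u y : E) (hz : ∀ x, z * x = x * z) :
    ⁅z * u, y⁆ = ⁅u, y⁆ := by
  rw [commutatorElement_def, commutatorElement_def]
  have : z * u * y * (z * u)⁻¹ = u * y * u⁻¹ := by
    rw [hz u, mul_assoc u z y, hz y]; group
  rw [this]

lemma commEl_central_right {E : Type} [Group E] (z u y : E) (hz : ∀ x, z * x = x * z) :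
    ⁅u, z * y⁆ = ⁅u, y⁆ := by
  rw [← commutatorElement_inv, commEl_central_left z y u hz, commutatorElement_inv]

lemma eq_lft (x : CE c) : x = ⟨x.a - c.1 1 1, 1⟩ * lft c x.g := by
  ext
  · simp [lft, coc_one_left c.2 x.g]
  · simp [lft]

lemma comm_eq_lft (x y : CE c) : ⁅x, y⁆ = ⁅lft c x.g, lft c y.g⁆ := by
  conv_lhs => rw [eq_lft c x, eq_lft c y]
  rw [commEl_central_left _ _ _ (central_a c _), commEl_central_right _ _ _ (central_a c _)]

/-- the commutator form -/
def bform (c : G → G → A) (s : G → A) (g h : G) : A :=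
  c g h - c h g - c ⁅g, h⁆ (h * g) + s ⁅g, h⁆

/-- retraction -/
def ret (s : G → A) (x : CE c) : A := x.a + s x.g

lemma bform_eq (s : G → A) (x y : CE c) : bform c.1 s x.g y.g = ret c s ⁅x, y⁆ := by
  rw [comm_eq_lft, comm_lft]; rfl

lemma ret_mul (N : Subgroup G) (s : G → A)
    (hs : ∀ w ∈ N, ∀ w' ∈ N, c.1 w w' = s w + s w' - s (w * w')) (x y : CE c)
    (hx : x.g ∈ N) (hy : y.g ∈ N) : ret c s (x * y) = ret c s x + ret c s y := by
  simp only [ret, mul_a, mul_g, hs _ hx _ hy]; abel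

lemma commg (x y : CE c) : (⁅x, y⁆ : CE c).g = ⁅x.g, y.g⁆ := map_commutatorElement (proj c) x y

/-- Alternating biadditive form. -/
structure IsForm (b : G → G → A) : Prop where
  add_left : ∀ g g' h, b (g * g') h = b g h + b g' h
  add_right : ∀ g h h', b g (h * h') = b g h + b g h'
  alt : ∀ g, b g g = 0

lemma bform_isForm (N : Subgroup G) (hN : ∀ g h : G, ⁅g, h⁆ ∈ N)
    (hZ : ∀ w ∈ N, ∀ g, w * g = g * w) (s : G → A)
    (hs : ∀ w ∈ N, ∀ w' ∈ N, c.1 w w' = s w + s w' - s (w * w'))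
    (hb : ∀ w ∈ N, ∀ g, c.1 w g = c.1 g w) : IsForm (bform c.1 s) := by
  have hcen : ∀ x y z : CE c, ⁅x, y⁆ * z = z * ⁅x, y⁆ := by
    intro x y z
    have hm : (⁅x, y⁆ : CE c).g ∈ N := by rw [commg]; exact hN _ _
    exact central_of c (hZ _ hm) (hb _ hm) (⁅x, y⁆ : CE c).a z
  have hmem : ∀ x y : CE c, (⁅x, y⁆ : CE c).g ∈ N := fun x y => by rw [commg]; exact hN _ _
  refine ⟨?_, ?_, ?_⟩
  · intro g g' h
    have e := bform_eq c s (lft c g * lft c g') (lft c h)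
    have e1 := bform_eq c s (lft c g) (lft c h)
    have e2 := bform_eq c s (lft c g') (lft c h)
    have k : ⁅lft c g * lft c g', lft c h⁆ = ⁅lft c g, lft c h⁆ * ⁅lft c g', lft c h⁆ := by
      have h0 : ⁅lft c g * lft c g', lft c h⁆
        = lft c g * ⁅lft c g', lft c h⁆ * (lft c g)⁻¹ * ⁅lft c g, lft c h⁆ := by
        simp only [commutatorElement_def]; group
      rw [h0, ← hcen (lft c g') (lft c h) (lft c g), mul_inv_cancel_right, hcen]
    rw [k, ret_mul c N s hs _ _ (hmem _ _) (hmem _ _), ← e1, ← e2] at e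
    exact e
  · intro g h h'
    have e := bform_eq c s (lft c g) (lft c h * lft c h')
    have e1 := bform_eq c s (lft c g) (lft c h)
    have e2 := bform_eq c s (lft c g) (lft c h')
    have k : ⁅lft c g, lft c h * lft c h'⁆ = ⁅lft c g, lft c h⁆ * ⁅lft c g, lft c h'⁆ := by
      have h0 : ⁅lft c g, lft c h * lft c h'⁆
        = ⁅lft c g, lft c h⁆ * (lft c h * ⁅lft c g, lft c h'⁆ * (lft c h)⁻¹) := by
        simp only [commutatorElement_def]; group
      rw [h0, ← hcen (lft c g) (lft c h') (lft c h), mul_inv_cancel_right]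
    rw [k, ret_mul c N s hs _ _ (hmem _ _) (hmem _ _), ← e1, ← e2] at e
    exact e
  · intro g
    have h1 : s 1 = c.1 1 1 := by
      have := hs 1 N.one_mem 1 N.one_mem
      simp only [mul_one] at this
      rw [this]; abel
    simp [bform, coc_one_left c.2, h1]

lemma extend_hom {H : Type} [Group H] (hA : Module.Baer ℤ A) (N : Subgroup H)
    (f : N →* Multiplicative A) (hf : ∀ n : N, (n : H) ∈ commutator H → f n = 1) :
    ∃ F : H →* Multiplicative A, ∀ n : N, F n = f n := by
  let φ : N →* Abelianization H := Abelianization.of.comp N.subtype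
  have hker : φ.rangeRestrict.ker ≤ f.ker := by
    intro n hn
    rw [MonoidHom.ker_rangeRestrict, MonoidHom.mem_ker] at hn
    rw [MonoidHom.mem_ker]
    apply hf
    rw [← Abelianization.ker_of]
    exact hn
  let ψ : φ.range →* Multiplicative A :=
    φ.rangeRestrict.liftOfSurjective φ.rangeRestrict_surjective ⟨f, hker⟩
  have hψ : ∀ n, ψ (φ.rangeRestrict n) = f n := fun n => by
    exact MonoidHom.liftOfRightInverse_comp_apply _ _ _ ⟨f, hker⟩ n
  obtain ⟨F, hF⟩ := hA.extension_property_addMonoidHom (MonoidHom.toAdditive φ.range.subtype)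
    (fun x y h => by
      exact Subtype.val_injective h) (MonoidHom.toAdditiveLeft ψ)
  refine ⟨(AddMonoidHom.toMultiplicativeRight F).comp Abelianization.of, fun n => ?_⟩
  rw [← hψ n]
  exact DFunLike.congr_fun hF (Additive.ofMul (φ.rangeRestrict n))

lemma exists_trivialization (hA : Module.Baer ℤ A) (N : Subgroup G) (hN : ∀ g h : G, ⁅g, h⁆ ∈ N)
    (s : G → A)
    (hs : ∀ w ∈ N, ∀ w' ∈ N, c.1 w w' = s w + s w' - s (w * w'))
    (hb : ∀ g h, bform c.1 s g h = 0) :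
    ∃ τ : G → A, (∀ g h, c.1 g h = τ g + τ h - τ (g * h)) ∧ ∀ w ∈ N, τ w = s w := by
  have h1 : ret c s 1 = 0 := by
    have := ret_mul c N s hs 1 1 N.one_mem N.one_mem
    simpa using this
  let f : N.comap (proj c) →* Multiplicative A :=
    { toFun := fun x => Multiplicative.ofAdd (ret c s x.1)
      map_one' := by
        change Multiplicative.ofAdd (ret c s 1) = 1
        rw [h1]; rfl
      map_mul' := fun x y => by
        change Multiplicative.ofAdd (ret c s (x.1 * y.1)) = _
        rw [ret_mul c N s hs _ _ x.2 y.2]; rfl }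
  obtain ⟨F, hF⟩ := extend_hom hA (N.comap (proj c)) f (by
    have key : commutator (CE c) ≤ f.ker.map (Subgroup.subtype _) := by
      rw [commutator_def, Subgroup.commutator_le]
      intro x _ y _
      refine ⟨⟨⁅x, y⁆, ?_⟩, ?_, rfl⟩
      · change (⁅x, y⁆ : CE c).g ∈ N
        rw [commg]; exact hN _ _
      · change Multiplicative.ofAdd (ret c s ⁅x, y⁆) = 1
        rw [← bform_eq, hb]; rfl
    intro n hn
    obtain ⟨m, hm, hmn⟩ := key hn
    have : m = n := Subtype.ext hmn
    rw [← this]; exact hm)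
  have hF' : ∀ x : CE c, x.g ∈ N → (F x).toAdd = ret c s x := fun x hx => by
    have := hF ⟨x, hx⟩
    rw [this]; rfl
  refine ⟨fun g => (F (lft c g)).toAdd, ?_, ?_⟩
  · intro g h
    have e : lft c g * lft c h = ⟨c.1 g h - c.1 1 1, 1⟩ * lft c (g * h) := by
      rw [eq_lft c (lft c g * lft c h)]
      simp [lft]
    have e2 := congrArg (fun x => (F x).toAdd) e
    simp only [map_mul, toAdd_mul] at e2
    have e3 := hF' ⟨c.1 g h - c.1 1 1, 1⟩ N.one_mem
    have e4 : s 1 = c.1 1 1 := by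
      simp only [ret, one_a, one_g] at h1
      have := eq_neg_of_add_eq_zero_right h1
      rw [this, neg_neg]
    rw [e3] at e2
    simp only [ret, e4, sub_add_cancel] at e2
    rw [e2]; abel
  · intro w hw
    have := hF' (lft c w) hw
    change (F (lft c w)).toAdd = _
    rw [this]; simp [ret, lft]

lemma add_zero_on_closure (f : G → A) (hf : ∀ g h, f (g * h) = f g + f h) (S : Set G)
    (hS : ∀ x ∈ S, f x = 0) : ∀ x ∈ Subgroup.closure S, f x = 0 := by
  let F : G →* Multiplicative A := MonoidHom.mk' (fun g => Multiplicative.ofAdd (f g)) (by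
    intro g h; rw [hf]; rfl)
  have : Subgroup.closure S ≤ F.ker := by
    rw [Subgroup.closure_le]
    intro x hx
    exact hS x hx
  intro x hx
  exact this hx

lemma add_zero_on_commutator (f : G → A) (hf : ∀ g h, f (g * h) = f g + f h) :
    ∀ x ∈ commutator G, f x = 0 := by
  let F : G →* Multiplicative A := MonoidHom.mk' (fun g => Multiplicative.ofAdd (f g)) (by
    intro g h; rw [hf]; rfl)
  intro x hx
  exact Abelianization.commutator_subset_ker F hx

lemma add_pow_eq (f : G → A) (hf : ∀ g h, f (g * h) = f g + f h) (g : G) (n : ℕ) :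
    f (g ^ n) = n • f g := by
  let F : G →* Multiplicative A := MonoidHom.mk' (fun g => Multiplicative.ofAdd (f g)) (by
    intro g h; rw [hf]; rfl)
  exact map_pow F g n

lemma IsForm.neg {b : G → G → A} (hb : IsForm b) (g h : G) : b g h = - b h g := by
  have h1 := hb.alt (g * h)
  rw [hb.add_left, hb.add_right, hb.add_right, hb.alt, hb.alt] at h1
  simp only [zero_add, add_zero] at h1
  exact eq_neg_of_add_eq_zero_left h1

lemma IsForm.gen_zero {b : G → G → A} (hb : IsForm b) {n : ℕ} (x : Fin n → G)
    (h : ∀ i j, i < j → b (x i) (x j) = 0) (i j : Fin n) : b (x i) (x j) = 0 := by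
  rcases lt_trichotomy i j with h1 | h1 | h1
  · exact h i j h1
  · rw [h1, hb.alt]
  · rw [hb.neg, h j i h1, neg_zero]

lemma IsForm.eq_zero {b : G → G → A} (hb : IsForm b) {n : ℕ} (x : Fin n → G)
    (hx : Subgroup.closure (Set.range x) = ⊤)
    (h : ∀ i j, i < j → b (x i) (x j) = 0) (g g' : G) : b g g' = 0 := by
  have h0 := hb.gen_zero x h
  have h1 : ∀ i g, b (x i) g = 0 := fun i g =>
    add_zero_on_closure (b (x i)) (hb.add_right _) (Set.range x)
      (by rintro _ ⟨j, rfl⟩; exact h0 i j) g (by rw [hx]; trivial)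
  exact add_zero_on_closure (fun g => b g g') (fun _ _ => hb.add_left _ _ _) (Set.range x)
      (by rintro _ ⟨j, rfl⟩; exact h1 _ _) g (by rw [hx]; trivial)

lemma IsForm.torsion {b : G → G → A} (hb : IsForm b) {p : ℕ}
    (hpm : ∀ g : G, g ^ p ∈ commutator G) (g h : G) : p • b g h = 0 := by
  rw [← add_pow_eq (fun g => b g h) (fun _ _ => hb.add_left _ _ _)]
  exact add_zero_on_commutator (fun g => b g h) (fun _ _ => hb.add_left _ _ _) _ (hpm g)

lemma IsForm.sub {b b' : G → G → A} (hb : IsForm b) (hb' : IsForm b') :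
    IsForm (fun g h => b g h - b' g h) := by
  refine ⟨?_, ?_, ?_⟩
  · intro g g' h; simp only [hb.add_left, hb'.add_left]; abel
  · intro g g' h; simp only [hb.add_right, hb'.add_right]; abel
  · intro g; simp only [hb.alt, hb'.alt]; abel

/-- Codes of forms. -/
abbrev Cd (A : Type) [AddCommGroup A] (p n : ℕ) : Type :=
  ((j : Fin n) × Fin j.val) → {a : A // p • a = 0}

lemma card_Cd {p : ℕ} (hT : Nat.card {a : A // p • a = 0} = p) (n : ℕ) :
    Nat.card (Cd A p n) = p ^ (n.choose 2) := by
  rw [Nat.card_fun, hT]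
  congr 1
  rw [Nat.card_eq_fintype_card, Fintype.card_sigma]
  simp only [Fintype.card_fin]
  rw [Fin.sum_univ_eq_sum_range (fun i => i) n, Finset.sum_range_id, Nat.choose_two_right]

/-- The code of a form with respect to a family of elements. -/
def code {b : G → G → A} (hb : IsForm b) {p : ℕ}
    (hpm : ∀ g : G, g ^ p ∈ commutator G) {n : ℕ} (x : Fin n → G) : Cd A p n :=
  fun ij => ⟨b (x ⟨ij.2.1, ij.2.2.trans ij.1.2⟩) (x ij.1), hb.torsion hpm _ _⟩

lemma code_eq {b b' : G → G → A} (hb : IsForm b) (hb' : IsForm b') {p : ℕ}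
    (hpm : ∀ g : G, g ^ p ∈ commutator G) {n : ℕ} (x : Fin n → G)
    (h : code hb hpm x = code hb' hpm x) (i j : Fin n) (hij : i < j) :
    b (x i) (x j) - b' (x i) (x j) = 0 := by
  have := congrArg Subtype.val (congrFun h ⟨j, ⟨i.1, hij⟩⟩)
  exact sub_eq_zero_of_eq this

/-- commutator pairing -/
def bet (c : G → G → A) (g w : G) : A := c g w - c w g

lemma bet_add {c : G → G → A} (hc : IsCoc c) {g g' w : G} (h : g * w = w * g)
    (h' : g' * w = w * g') : bet c (g * g') w = bet c g w + bet c g' w := by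
  have h1 := hc g g' w
  have h2 := hc g w g'
  have h3 := hc w g g'
  rw [h] at h2
  rw [h'] at h1
  simp only [bet]
  grind

lemma bet_add_right {c : G → G → A} (hc : IsCoc c) {g w w' : G} (h : w * g = g * w)
    (h' : w' * g = g * w') : bet c g (w * w') = bet c g w + bet c g w' := by
  have := bet_add hc h h'
  simp only [bet] at this ⊢
  grind

lemma bet_pow {c : G → G → A} (hc : IsCoc c) (g : G) (n : ℕ) : c g (g ^ n) = c (g ^ n) g := by
  induction n with
  | zero => rw [pow_zero, coc_one_left hc, coc_one_right hc]
  | succ n ih =>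
    have := hc g (g ^ n) g
    rw [← pow_succ, ← pow_succ', ih, add_comm (c (g ^ n) g)] at this
    exact (add_right_cancel this).symm

/-- the pulled back pairing -/
def gam (c : G → G → A) (p : ℕ) (g h : G) : A := bet c g (h ^ p)

lemma gam_isForm {c : G → G → A} (hc : IsCoc c) {p : ℕ}
    (hcent : ∀ w ∈ commutator G, ∀ g, w * g = g * w)
    (hpow : ∀ g h : G, (g * h) ^ p = g ^ p * h ^ p)
    (hpm : ∀ g : G, g ^ p ∈ commutator G) : IsForm (gam c p) := by
  refine ⟨?_, ?_, ?_⟩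
  · intro g g' h
    exact bet_add hc (hcent _ (hpm _) _).symm (hcent _ (hpm _) _).symm
  · intro g h h'
    simp only [gam, hpow]
    exact bet_add_right hc (hcent _ (hpm _) _) (hcent _ (hpm _) _)
  · intro g
    simp only [gam, bet, bet_pow hc, sub_self]

lemma IsCoc.sub {c c' : G → G → A} (hc : IsCoc c) (hc' : IsCoc c') :
    IsCoc (fun g h => c g h - c' g h) := by
  intro g h j
  have h1 := hc g h j
  have h2 := hc' g h j
  simp only
  grind

lemma gam_sub (c c' : G → G → A) (p : ℕ) (g h : G) :
    gam (fun g h => c g h - c' g h) p g h = gam c p g h - gam c' p g h := by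
  simp only [gam, bet]; abel

/-- If the codes agree then the difference pairs trivially with the commutator subgroup. -/
lemma bet_zero_of_code {c c' : G → G → A} (hc : IsCoc c) (hc' : IsCoc c') {p k : ℕ}
    (hcent : ∀ w ∈ commutator G, ∀ g, w * g = g * w)
    (hpow : ∀ g h : G, (g * h) ^ p = g ^ p * h ^ p)
    (hpm : ∀ g : G, g ^ p ∈ commutator G)
    (y : Fin k → G) (hy : Subgroup.closure (Set.range fun i => y i ^ p) = commutator G)
    (h : code (gam_isForm hc hcent hpow hpm) hpm y = code (gam_isForm hc' hcent hpow hpm) hpm y) :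
    ∀ w ∈ commutator G, ∀ g, c w g - c' w g = c g w - c' g w := by
  have hF := (gam_isForm hc hcent hpow hpm).sub (gam_isForm hc' hcent hpow hpm)
  have hd := hc.sub hc'
  have h0 := hF.gen_zero y (code_eq _ _ hpm y h)
  simp only [← gam_sub] at hF h0
  -- a form vanishing on `g, y j` for all `j` vanishes on `g, h` for all `h`
  have step : ∀ g, (∀ j, gam (fun g h => c g h - c' g h) p g (y j) = 0) →
      ∀ w ∈ commutator G, bet (fun g h => c g h - c' g h) g w = 0 := by
    intro g hg w hw
    let f : commutator G → A := fun w => bet (fun g h => c g h - c' g h) g w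
    have hf : ∀ a b, f (a * b) = f a + f b := fun a b =>
      bet_add_right hd (hcent _ a.2 _) (hcent _ b.2 _)
    let F : commutator G →* Multiplicative A :=
      MonoidHom.mk' (fun g => Multiplicative.ofAdd (f g)) (by intro g h; rw [hf]; rfl)
    have hle : commutator G ≤ F.ker.map (Subgroup.subtype _) := by
      conv_lhs => rw [← hy]
      rw [Subgroup.closure_le]
      rintro _ ⟨j, rfl⟩
      exact ⟨⟨y j ^ p, hpm _⟩, hg j, rfl⟩
    obtain ⟨m, hm, hmw⟩ := hle hw
    have : m = ⟨w, hw⟩ := Subtype.ext hmw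
    rw [this] at hm
    exact hm
  have h1 : ∀ i g, gam (fun g h => c g h - c' g h) p (y i) g = 0 := fun i g =>
    step (y i) (h0 i) _ (hpm g)
  intro w hw g
  have := step g (fun j => by rw [hF.neg, h1, neg_zero]) w hw
  exact (sub_eq_zero.mp this).symm

/-- splitting over the commutator subgroup -/
lemma exists_split {c : G → G → A} (hc : IsCoc c) (hA : Module.Baer ℤ A)
    (hcent : ∀ w ∈ commutator G, ∀ g, w * g = g * w)
    (hb : ∀ w ∈ commutator G, ∀ g, c w g = c g w) :
    ∃ s : G → A, ∀ w ∈ commutator G, ∀ w' ∈ commutator G, c w w' = s w + s w' - s (w * w') := by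
  classical
  let c' : {c : commutator G → commutator G → A // IsCoc c} :=
    ⟨fun w w' => c w w', fun g h j => hc g h j⟩
  have hab : ∀ g h : commutator G, ⁅g, h⁆ = 1 := fun g h => by
    rw [commutatorElement_eq_one_iff_mul_comm]
    exact Subtype.ext (hcent _ g.2 _)
  obtain ⟨τ, hτ, -⟩ := exists_trivialization c' hA ⊥ (fun g h => by rw [hab]; exact Subgroup.one_mem _)
    (fun _ => c 1 1) (by
      intro w hw w' hw'
      rw [Subgroup.mem_bot] at hw hw'
      subst hw hw'
      simp [c']) (by
      intro g h
      simp only [bform, hab, c', Subgroup.coe_one]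
      rw [coc_one_left hc, hb _ g.2]; abel)
  refine ⟨fun g => if h : g ∈ commutator G then τ ⟨g, h⟩ else 0, ?_⟩
  intro w hw w' hw'
  simp only
  rw [dif_pos hw, dif_pos hw', dif_pos (Subgroup.mul_mem _ hw hw')]
  exact hτ ⟨w, hw⟩ ⟨w', hw'⟩

lemma bform_sub (c c' : G → G → A) (s s' : G → A) (g h : G) :
    bform (fun g h => c g h - c' g h) (fun g => s g - s' g) g h
      = bform c s g h - bform c' s' g h := by
  simp only [bform]; abel

theorem main_count {p k d : ℕ} (hp0 : 0 < p) (hA : Module.Baer ℤ A)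
    (hT : Nat.card {a : A // p • a = 0} = p)
    (hcent : ∀ w ∈ commutator G, ∀ g, w * g = g * w)
    (hpow : ∀ g h : G, (g * h) ^ p = g ^ p * h ^ p)
    (hpm : ∀ g : G, g ^ p ∈ commutator G)
    (x : Fin d → G) (hx : Subgroup.closure (Set.range x) = ⊤)
    (y : Fin k → G) (hy : Subgroup.closure (Set.range fun i => y i ^ p) = commutator G)
    (H : Type) (q : H → G → G → A) (hq : ∀ κ, IsCoc (q κ))
    (hinj : ∀ κ κ' (τ : G → A), (∀ g h, q κ g h - q κ' g h = τ g + τ h - τ (g * h)) → κ = κ') :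
    Nat.card H * Nat.card (commutator G →* Multiplicative A)
      ≤ p ^ (k.choose 2) * p ^ (d.choose 2) := by
  classical
  have hfin : Finite {a : A // p • a = 0} := Nat.finite_of_card_ne_zero (by omega)
  rw [← card_Cd hT, ← card_Cd hT, ← Nat.card_prod, ← Nat.card_prod]
  let cW : H → Cd A p k := fun κ => code (gam_isForm (hq κ) hcent hpow hpm) hpm y
  -- chosen representative of the codes
  let R : H → H := fun κ => Set.rangeSplitting cW ⟨cW κ, κ, rfl⟩
  have hR : ∀ κ, cW (R κ) = cW κ := fun κ => Set.apply_rangeSplitting cW ⟨cW κ, κ, rfl⟩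
  have hR' : ∀ κ κ', cW κ = cW κ' → R κ = R κ' := fun κ κ' h => by
    simp only [R, h]
  let e : H → G → G → A := fun κ g h => q κ g h - q (R κ) g h
  have he : ∀ κ, IsCoc (e κ) := fun κ => (hq κ).sub (hq (R κ))
  have hb : ∀ κ, ∀ w ∈ commutator G, ∀ g, e κ w g = e κ g w := fun κ =>
    bet_zero_of_code (hq κ) (hq (R κ)) hcent hpow hpm y hy (hR κ).symm
  choose s hs using fun κ => exists_split (he κ) hA hcent (hb κ)
  let S : H → (commutator G →* Multiplicative A) → G → A := fun κ χ g =>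
    s κ g + if h : g ∈ commutator G then (χ ⟨g, h⟩).toAdd else 0
  have hS : ∀ κ χ, ∀ w ∈ commutator G, ∀ w' ∈ commutator G,
      e κ w w' = S κ χ w + S κ χ w' - S κ χ (w * w') := by
    intro κ χ w hw w' hw'
    have hm : χ ⟨w * w', Subgroup.mul_mem _ hw hw'⟩ = χ ⟨w, hw⟩ * χ ⟨w', hw'⟩ :=
      map_mul χ ⟨w, hw⟩ ⟨w', hw'⟩
    simp only [S]
    rw [dif_pos hw, dif_pos hw', dif_pos (Subgroup.mul_mem _ hw hw'), hs κ w hw w' hw', hm,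
      toAdd_mul]
    abel
  have hN : ∀ g h : G, ⁅g, h⁆ ∈ commutator G := fun g h =>
    Subgroup.commutator_mem_commutator (Subgroup.mem_top g) (Subgroup.mem_top h)
  have hF : ∀ κ χ, IsForm (bform (e κ) (S κ χ)) := fun κ χ =>
    bform_isForm ⟨e κ, he κ⟩ (commutator G) hN hcent (S κ χ) (hS κ χ) (hb κ)
  let Φ : H × (commutator G →* Multiplicative A) → Cd A p k × Cd A p d := fun t =>
    (cW t.1, code (hF t.1 t.2) hpm x)
  refine Nat.card_le_card_of_injective Φ ?_
  rintro ⟨κ, χ⟩ ⟨κ', χ'⟩ h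
  have h1 : cW κ = cW κ' := congrArg Prod.fst h
  have h2 : code (hF κ χ) hpm x = code (hF κ' χ') hpm x := congrArg Prod.snd h
  have h3 := ((hF κ χ).sub (hF κ' χ')).eq_zero x hx (code_eq _ _ hpm x h2)
  simp only [← bform_sub] at h3
  obtain ⟨τ, hτ, hτs⟩ := exists_trivialization ⟨_, (he κ).sub (he κ')⟩ hA (commutator G) hN
    (fun g => S κ χ g - S κ' χ' g) (by
      intro w hw w' hw'
      simp only [hS κ χ w hw w' hw', hS κ' χ' w hw w' hw']
      abel) h3
  have hκ : κ = κ' := by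
    apply hinj κ κ' τ
    intro g h
    rw [← hτ g h]
    simp only [e, hR' κ κ' h1]
    abel
  subst hκ
  have hτ0 : ∀ w ∈ commutator G, τ w = 0 := add_zero_on_commutator τ (fun g h => by
    have := hτ g h
    simp only [sub_self] at this
    exact (sub_eq_zero.mp this.symm).symm)
  congr 1
  ext w
  have h4 := hτs w w.2
  rw [hτ0 w w.2] at h4
  simp only [S] at h4
  rw [dif_pos w.2, dif_pos w.2, add_sub_add_left_eq_sub] at h4
  exact Multiplicative.toAdd.injective (sub_eq_zero.mp h4.symm)


lemma baer_units : Module.Baer ℤ (Additive ℂˣ) := by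
  have hs : ∀ {n : ℕ}, n ≠ 0 → Function.Surjective (fun a : Additive ℂˣ => n • a) := by
    intro n hn a
    obtain ⟨z, hz⟩ := IsAlgClosed.exists_pow_nat_eq (a.toMul : ℂ) (Nat.pos_of_ne_zero hn)
    have hz0 : z ≠ 0 := by
      rintro rfl
      rw [zero_pow hn] at hz
      exact a.toMul.ne_zero hz.symm
    refine ⟨Additive.ofMul (Units.mk0 z hz0), ?_⟩
    apply Additive.toMul.injective
    apply Units.ext
    simpa using hz
  let : DivisibleBy (Additive ℂˣ) ℕ := divisibleByOfSMulRightSurj _ _ hs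
  let : DivisibleBy (Additive ℂˣ) ℤ := AddGroup.divisibleByIntOfDivisibleByNat _
  exact Module.Baer.of_divisible _

lemma card_tors {p : ℕ} (hp : 0 < p) : Nat.card {a : Additive ℂˣ // p • a = 0} = p := by
  have : NeZero p := ⟨hp.ne'⟩
  have := Complex.card_rootsOfUnity p
  refine Eq.trans ?_ this
  exact Nat.card_congr ⟨fun a => ⟨a.1.toMul, by
      rw [mem_rootsOfUnity]; exact a.2⟩, fun a => ⟨Additive.ofMul a.1, by
      have := a.2
      rw [mem_rootsOfUnity] at this; exact this⟩, fun _ => rfl, fun _ => rfl⟩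

lemma gen_pgroup {p : ℕ} (hp : p.Prime) (H : Type) [Group H] [Finite H] {k : ℕ}
    (hk : Nat.card H = p ^ k) : ∃ y : Fin k → H, Subgroup.closure (Set.range y) = ⊤ := by
  have : Fact p.Prime := ⟨hp⟩
  have key : ∀ j : ℕ, ∃ y : Fin j → H, Subgroup.closure (Set.range y) = ⊤ ∨
      p ^ j ≤ Nat.card (Subgroup.closure (Set.range y)) := by
    intro j
    induction j with
    | zero => exact ⟨fun _ => 1, Or.inr (by simpa using Nat.card_pos)⟩
    | succ j ih =>
      obtain ⟨y, hy⟩ := ih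
      by_cases ht : Subgroup.closure (Set.range y) = ⊤
      · refine ⟨Fin.snoc y 1, Or.inl ?_⟩
        rw [eq_top_iff, ← ht]
        apply Subgroup.closure_mono
        rintro _ ⟨i, rfl⟩
        exact ⟨i.castSucc, by simp⟩
      · obtain ⟨z, hz⟩ : ∃ z, z ∉ Subgroup.closure (Set.range y) := by
          by_contra! hcon
          exact ht (eq_top_iff.mpr fun z _ => hcon z)
        have hy' := hy.resolve_left ht
        refine ⟨Fin.snoc y z, Or.inr ?_⟩
        have hle : Subgroup.closure (Set.range y) ≤
            Subgroup.closure (Set.range (Fin.snoc y z : Fin (j + 1) → H)) := by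
          apply Subgroup.closure_mono
          rintro _ ⟨i, rfl⟩
          exact ⟨i.castSucc, by simp⟩
        have hlt : Subgroup.closure (Set.range y) <
            Subgroup.closure (Set.range (Fin.snoc y z : Fin (j + 1) → H)) := by
          refine lt_of_le_of_ne hle ?_
          intro he
          apply hz
          rw [he]
          exact Subgroup.subset_closure ⟨Fin.last j, by simp⟩
        have hcard : Nat.card (Subgroup.closure (Set.range y)) <
            Nat.card (Subgroup.closure (Set.range (Fin.snoc y z : Fin (j + 1) → H))) := by
          exact Set.ncard_lt_ncard hlt (Set.toFinite _)
        have hd := Subgroup.card_subgroup_dvd_card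
          (Subgroup.closure (Set.range (Fin.snoc y z : Fin (j + 1) → H)))
        rw [hk, Nat.dvd_prime_pow hp] at hd
        obtain ⟨m, -, hm⟩ := hd
        rw [hm] at hcard ⊢
        have : j < m := (Nat.pow_lt_pow_iff_right hp.one_lt).mp (hy'.trans_lt hcard)
        exact Nat.pow_le_pow_right hp.pos this
  obtain ⟨y, hy | hy⟩ := key k
  · exact ⟨y, hy⟩
  · exact ⟨y, Subgroup.eq_top_of_le_card _ (by rw [hk]; exact hy)⟩

lemma gen_rank (G : Type) [Group G] [Finite G] :
    ∃ x : Fin (Group.rank G) → G, Subgroup.closure (Set.range x) = ⊤ := by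
  obtain ⟨S, hS, hc⟩ := Group.rank_spec G
  refine ⟨fun i => (S.equivFin.symm (Fin.cast hS.symm i)).1, ?_⟩
  rw [← hc]
  congr 1
  ext a
  constructor
  · rintro ⟨i, rfl⟩
    exact (S.equivFin.symm (Fin.cast hS.symm i)).2
  · intro ha
    exact ⟨Fin.cast hS (S.equivFin ⟨a, ha⟩), by simp⟩

lemma class_two_pow {p : ℕ} (hp : p.Prime) (hodd : p ≠ 2)
    (hcent : ∀ w ∈ commutator G, ∀ g, w * g = g * w)
    (hpm : ∀ g : G, g ^ p ∈ commutator G) (x y : G) : (x * y) ^ p = x ^ p * y ^ p := by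
  have hN : ⁅y, x⁆ ∈ commutator G :=
    Subgroup.commutator_mem_commutator (Subgroup.mem_top y) (Subgroup.mem_top x)
  obtain ⟨z, hz⟩ : ∃ z, z = ⁅y, x⁆ := ⟨_, rfl⟩
  have hzc : ∀ g, Commute z g := fun g => by rw [hz]; exact hcent _ hN g
  have hyx : y * x = z * (x * y) := by rw [hz, commutatorElement_def]; group
  have h1 : ∀ n : ℕ, y ^ n * x = z ^ n * (x * y ^ n) := by
    intro n
    induction n with
    | zero => simp
    | succ n ih =>
      calc y ^ (n + 1) * x = y * (y ^ n * x) := by rw [pow_succ', mul_assoc]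
        _ = y * z ^ n * (x * y ^ n) := by rw [ih, mul_assoc]
        _ = z ^ n * (y * x) * y ^ n := by
          rw [← ((hzc y).pow_left n).eq]; simp only [mul_assoc]
        _ = z ^ (n + 1) * (x * y ^ (n + 1)) := by
          rw [hyx, pow_succ, pow_succ']; simp only [mul_assoc]
  have hzp : z ^ p = 1 := by
    have e := h1 p
    rw [hcent _ (hpm y) x] at e
    exact (mul_eq_right.mp e.symm)
  have h2 : ∀ n : ℕ, (x * y) ^ n = z ^ (n.choose 2) * (x ^ n * y ^ n) := by
    intro n
    induction n with
    | zero => simp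
    | succ n ih =>
      calc (x * y) ^ (n + 1) = z ^ (n.choose 2) * (x ^ n * (y ^ n * x) * y) := by
            rw [pow_succ, ih]; simp only [mul_assoc]
        _ = z ^ (n.choose 2) * (x ^ n * z ^ n * (x * y ^ n) * y) := by
            rw [h1]; simp only [mul_assoc]
        _ = z ^ (n.choose 2) * (z ^ n * x ^ n * (x * y ^ n) * y) := by
            rw [((hzc (x ^ n)).pow_left n).eq]
        _ = z ^ ((n + 1).choose 2) * (x ^ (n + 1) * y ^ (n + 1)) := by
            have : (n + 1).choose 2 = n.choose 2 + n := by
              rw [Nat.choose_succ_succ' n 1, Nat.choose_one_right, add_comm]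
            rw [this, pow_add, pow_succ, pow_succ]; simp only [mul_assoc]
  have hdvd : p ∣ p.choose 2 := hp.dvd_choose_self (by norm_num)
    (lt_of_le_of_ne hp.two_le (Ne.symm hodd))
  obtain ⟨m, hm⟩ := hdvd
  rw [h2 p, hm, pow_mul, hzp, one_pow, one_mul]

lemma class_two_central [Group.IsNilpotent G] (hc : Group.nilpotencyClass G = 2) :
    ∀ w ∈ commutator G, ∀ g, w * g = g * w := by
  have h2 := Subgroup.lowerCentralSeries_nilpotencyClass (G := G)
  rw [hc] at h2
  intro w hw g
  have h3 : ⁅w, g⁆ ∈ Subgroup.lowerCentralSeries (⊤ : Subgroup G) 2 :=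
    Subgroup.commutator_mem_commutator (H₁ := commutator G) hw (Subgroup.mem_top g)
  rw [h2, Subgroup.mem_bot, commutatorElement_eq_one_iff_mul_comm] at h3
  exact h3

end SchurAux

namespace SchurAux

lemma exists_section (G : Type) [Group G] :
    ∃ q : schurMultiplier G → G → G → Additive ℂˣ, (∀ κ, IsCoc (q κ)) ∧
      ∀ κ κ' (τ : G → Additive ℂˣ),
        (∀ g h, q κ g h - q κ' g h = τ g + τ h - τ (g * h)) → κ = κ' := by
  have hsurj : ∀ κ : schurMultiplier G,
      ∃ f : groupCohomology.cocycles₂ (Rep.trivial ℤ G (Additive ℂˣ)),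
        groupCohomology.H2π (Rep.trivial ℤ G (Additive ℂˣ)) f = κ := by
    intro κ
    refine groupCohomology.H2_induction_on (A := Rep.trivial ℤ G (Additive ℂˣ))
      (C := fun κ => ∃ f : groupCohomology.cocycles₂ (Rep.trivial ℤ G (Additive ℂˣ)),
        groupCohomology.H2π (Rep.trivial ℤ G (Additive ℂˣ)) f = κ) κ (fun x => ⟨x, rfl⟩)
  choose f hf using hsurj
  refine ⟨fun κ g h => (f κ).1 (g, h), ?_, ?_⟩
  · intro κ g h j
    exact (groupCohomology.mem_cocycles₂_iff (f κ).1).1 (f κ).2 g h j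
  · intro κ κ' τ h
    rw [← hf κ, ← hf κ']
    refine (groupCohomology.H2π_eq_iff _ _).2 ?_
    refine ⟨τ, ?_⟩
    funext gh
    obtain ⟨g, j⟩ := gh
    have h1 := h g j
    change τ j - τ (g * j) + τ g = (f κ).1 (g, j) - (f κ').1 (g, j)
    rw [h1]; abel

end SchurAux

/-- Corollary 2, the case where `p` is odd and `Gᵖ = γ₂(G)`:
`|M(G)| ≤ p ^ (d * (d - 1) / 2 + k * (k - 3) / 2)`. -/
theorem schur_multiplier_upper_bound_class_two_Gp_eq_comm (p k d : ℕ) (hp : p.Prime)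
    (hodd : p ≠ 2)
    (G : Type) [Group G] [Finite G] [Group.IsNilpotent G]
    (hpG : IsPGroup p G)
    (hc : Group.nilpotencyClass G = 2)
    (hGp : Subgroup.closure (Set.range fun x : G => x ^ p) = commutator G)
    (hk : Nat.card (commutator G) = p ^ k)
    (hd : Group.rank G = d) :
    (Nat.card (schurMultiplier G) : ℝ) ≤
      (p : ℝ) ^ ((d : ℝ) * ((d : ℝ) - 1) / 2 + (k : ℝ) * ((k : ℝ) - 3) / 2) := by
  have hpm : ∀ g : G, g ^ p ∈ commutator G := fun g => by
    rw [← hGp]; exact Subgroup.subset_closure ⟨g, rfl⟩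
  have hcent := SchurAux.class_two_central hc
  have hpow := SchurAux.class_two_pow hp hodd hcent hpm
  have hpW : ∀ w ∈ commutator G, ∃ h : G, h ^ p = w := by
    let f : G →* G := MonoidHom.mk' (fun g => g ^ p) hpow
    intro w hw
    have : commutator G ≤ f.range := by
      rw [← hGp, Subgroup.closure_le]
      rintro _ ⟨g, rfl⟩
      exact ⟨g, rfl⟩
    exact this hw
  obtain ⟨x, hx⟩ := SchurAux.gen_rank G
  obtain ⟨y0, hy0⟩ := SchurAux.gen_pgroup hp (commutator G) hk
  choose y hy using fun i => hpW (y0 i) (y0 i).2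
  have hy' : Subgroup.closure (Set.range fun i => y i ^ p) = commutator G := by
    have := congrArg (Subgroup.map (commutator G).subtype) hy0
    rw [MonoidHom.map_closure, ← MonoidHom.range_eq_map, Subgroup.range_subtype,
      ← Set.range_comp] at this
    rw [← this]
    congr 2
    funext i
    exact hy i
  obtain ⟨q, hq, hinj⟩ := SchurAux.exists_section G
  have hmain := SchurAux.main_count hp.pos SchurAux.baer_units (SchurAux.card_tors hp.pos) hcent
    hpow hpm x hx y hy' _ q hq hinj
  have hHom : Nat.card (commutator G →* Multiplicative (Additive ℂˣ)) = p ^ k := by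
    let : CommGroup (commutator G) :=
      { (inferInstance : Group (commutator G)) with
        mul_comm := fun a b => Subtype.ext (hcent _ a.2 _) }
    have : NeZero (Monoid.exponent (commutator G)) := ⟨Monoid.exponent_ne_zero_of_finite⟩
    rw [← hk]
    exact CommGroup.card_monoidHom_of_hasEnoughRootsOfUnity (commutator G) ℂ
  rw [hHom, hd] at hmain
  have hp0 : (0 : ℝ) < p := by exact_mod_cast hp.pos
  have hR : (Nat.card (schurMultiplier G) : ℝ) * (p : ℝ) ^ (k : ℝ)
      ≤ (p : ℝ) ^ (((k.choose 2 : ℕ) : ℝ) + ((d.choose 2 : ℕ) : ℝ)) := by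
    rw [Real.rpow_add hp0, Real.rpow_natCast, Real.rpow_natCast, Real.rpow_natCast]
    exact_mod_cast hmain
  rw [Nat.cast_choose_two, Nat.cast_choose_two] at hR
  have hE : (d : ℝ) * ((d : ℝ) - 1) / 2 + (k : ℝ) * ((k : ℝ) - 3) / 2
      = ((k : ℝ) * ((k : ℝ) - 1) / 2 + (d : ℝ) * ((d : ℝ) - 1) / 2) - k := by ring
  rw [hE, Real.rpow_sub hp0, le_div_iff₀ (Real.rpow_pos_of_pos hp0 _)]
  exact hR
end
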